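/- arXiv:1603.09006 — 6 statements merged into one kernel-verified Lean document; each statement's English description precedes it below -/
import Mathlib

section
/- Let 1 < q ≤ 2 and p = q/(q−1). Suppose sup_{n≥1} η_n < ∞ and η'_n → 0 as n → ∞, and suppose there exists a strictly increasing sequence of indices {n_k}_{k=1}^∞ such that: Σ_{k=1}^∞ t_{n_k+1}^p = ∞, t'_{n_k+1} = o(t_{n_k+1}), δ_{n_k} = o(t_{n_k+1}^p), δ'_{n_k} = o(t_{n_k+1}^p), η_{n_k} = o(t_{n_k+1}^p), and η'_{n_k} = o(t_{n_k+1}^p) as k → ∞. Then for every real Banach space X whose modulus of smoothness satisfies ρ(u) ≤ γ u^q for some γ > 0 and all u > 0, every dictionary D in X, every f ∈ X, and every realization of the gAWCGA of f with these weakness, perturbation and error sequences, one has ‖f_n‖ → 0. -/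
open Filter Topology Asymptotics

/-- The modulus of smoothness of a real normed space `X`:
`ρ(u) = sup_{‖x‖=‖y‖=1} (‖x+uy‖+‖x−uy‖)/2 − 1`. -/
noncomputable def modS (X : Type*) [NormedAddCommGroup X] [NormedSpace ℝ X] (u : ℝ) : ℝ :=
  sSup {r : ℝ | ∃ x y : X, ‖x‖ = 1 ∧ ‖y‖ = 1 ∧ r = (‖x + u • y‖ + ‖x - u • y‖) / 2 - 1}

/-- A dictionary in a real normed space `X`: a symmetric set of unit vectors whose
linear span is dense in `X`. -/
def IsDictionary {X : Type*} [NormedAddCommGroup X] [NormedSpace ℝ X] (D : Set X) : Prop :=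
  (∀ g ∈ D, ‖g‖ = 1) ∧ (∀ g ∈ D, -g ∈ D) ∧
    Dense ((Submodule.span ℝ D : Submodule ℝ X) : Set X)

/-- A realization of the generalized Approximate Weak Chebyshev Greedy Algorithm
(gAWCGA) of `f` with respect to the dictionary `D`, with weakness sequence `(t, t')`,
perturbation sequence `(δ, δ')` and error sequence `(η, η')`.
Here `G n` is the `n`-th approximant (`G 0 = 0`), `f - G n` the `n`-th remainder
`f_n`, `F n` the (approximate) norming functional of `f_n` used to choose
`φ (n+1) ∈ D`, and `G n` lies in `Φ_n = span {φ 1, …, φ n}` and almost minimizes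
`‖f - ·‖` over `Φ_n`. -/
def IsGAWCGA {X : Type*} [NormedAddCommGroup X] [NormedSpace ℝ X]
    (D : Set X) (f : X) (t t' δ δ' η η' : ℕ → ℝ)
    (F : ℕ → X →L[ℝ] ℝ) (φ : ℕ → X) (G : ℕ → X) : Prop :=
  G 0 = 0 ∧
  (∀ n : ℕ, ‖F n‖ ≤ 1 ∧ (1 - δ n) * ‖f - G n‖ - δ' n ≤ F n (f - G n)) ∧
  (∀ n : ℕ, φ (n + 1) ∈ D ∧
    t (n + 1) * sSup ((fun g => F n g) '' D) - t' (n + 1) ≤ F n (φ (n + 1))) ∧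
  (∀ n : ℕ, 1 ≤ n → G n ∈ Submodule.span ℝ (φ '' Set.Icc 1 n) ∧
    ‖f - G n‖ ≤ (1 + η n) *
      Metric.infDist f ((Submodule.span ℝ (φ '' Set.Icc 1 n) : Submodule ℝ X) : Set X)
      + η' n)

/-!
The distances `E n = dist (f, span {φ 1, …, φ n})` decrease to some `a ≥ 0`, and since
`‖f - G n‖ ≤ (1 + η n) * E n + η' n` it suffices to show `a = 0`. Suppose `a > 0`.

Smoothness of the norm gives `‖x - y‖ ≤ (1 + δ)‖x‖ + δ' + K‖y‖ ^ q - F y` whenever `‖x‖ ≥ a` and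
`F` almost norms `x` (`norm_sub_le_of_smooth`). Along the subsequence `n_k` this is used twice, with
`x = f - G n`.

* With `y` a small multiple of `-G n`: since `x` almost realizes the distance to the span, `F n (G n)`
  is bounded below by a quantity tending to `0`. Hence `F n f ≥ 3a/4` eventually; approximating `f` by
  an element of `span D` bounds `sup_D F n` below by a fixed `c > 0`
  (`exists_abs_le_mul_sSup`).
* With `y = λ φ (n + 1)`, `λ = μ t ^ (p - 1)`: as `F n (φ (n + 1)) ≥ (c / 2) t`, the gain
  `λ F n (φ (n + 1))` is at least `μ (c / 2) t ^ p`, while the smoothness loss is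
  `K μ ^ q t ^ p` because `(p - 1) q = p`. For small `μ` the distance drops by at least a fixed
  multiple of `t ^ p`, the other errors being `o(t ^ p)`.

The drops telescope, so `∑ t ^ p` converges (`summable_of_le_sub`), a contradiction.
-/

/-- Homogeneous form of the smoothness bound: the defect of `‖·‖` at `x` in the direction `y`
is of order `‖y‖ ^ q`, uniformly for `‖x‖ ≥ a`. -/
lemma norm_add_add_norm_sub_le {X : Type*} [NormedAddCommGroup X] [NormedSpace ℝ X]
    {q γ a : ℝ} (hq : 1 < q) (hγ : 0 < γ) (hX : ∀ u > 0, modS X u ≤ γ * u ^ q) (ha : 0 < a)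
    (x y : X) (hx : a ≤ ‖x‖) :
    ‖x + y‖ + ‖x - y‖ ≤ 2 * ‖x‖ + (2 * γ * a ^ (1 - q)) * ‖y‖ ^ q := by
  have hx0 : 0 < ‖x‖ := ha.trans_le hx
  rcases eq_or_ne y 0 with rfl | hy
  · simp [Real.zero_rpow (by linarith : q ≠ 0)]
    linarith
  have hy0 : 0 < ‖y‖ := norm_pos_iff.2 hy
  have hu : 0 < ‖y‖ / ‖x‖ := by positivity
  have hmem : (‖‖x‖⁻¹ • x + (‖y‖ / ‖x‖) • (‖y‖⁻¹ • y)‖ +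
      ‖‖x‖⁻¹ • x - (‖y‖ / ‖x‖) • (‖y‖⁻¹ • y)‖) / 2 - 1 ≤ modS X (‖y‖ / ‖x‖) := by
    apply le_csSup
    · refine ⟨‖y‖ / ‖x‖, ?_⟩
      rintro r ⟨v, w, hv, hw, rfl⟩
      have h1 := norm_add_le v ((‖y‖ / ‖x‖) • w)
      have h2 := norm_sub_le v ((‖y‖ / ‖x‖) • w)
      rw [norm_smul, hw, hv, Real.norm_of_nonneg hu.le] at h1 h2
      linarith
    · refine ⟨_, _, ?_, ?_, rfl⟩
      · rw [norm_smul, norm_inv, norm_norm, inv_mul_cancel₀ hx0.ne']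
      · rw [norm_smul, norm_inv, norm_norm, inv_mul_cancel₀ hy0.ne']
  have e0 : (‖y‖ / ‖x‖) • (‖y‖⁻¹ • y) = ‖x‖⁻¹ • y := by
    rw [smul_smul]
    congr 1
    field_simp
  rw [e0, ← smul_add, ← smul_sub, norm_smul, norm_smul, norm_inv, norm_norm] at hmem
  have h3 := hmem.trans (hX _ hu)
  have h4 : ‖x + y‖ + ‖x - y‖ ≤ 2 * ‖x‖ + 2 * γ * (‖x‖ * (‖y‖ / ‖x‖) ^ q) := by
    have h5 := mul_le_mul_of_nonneg_left h3 hx0.le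
    have h6 : ‖x‖ * ((‖x‖⁻¹ * ‖x + y‖ + ‖x‖⁻¹ * ‖x - y‖) / 2 - 1) =
        (‖x + y‖ + ‖x - y‖) / 2 - ‖x‖ := by
      field_simp
    rw [h6] at h5
    linarith
  have h7 : ‖x‖ * (‖y‖ / ‖x‖) ^ q = ‖x‖ ^ (1 - q) * ‖y‖ ^ q := by
    rw [Real.div_rpow hy0.le hx0.le, Real.rpow_sub hx0, Real.rpow_one]
    ring
  have h8 : ‖x‖ ^ (1 - q) ≤ a ^ (1 - q) :=
    Real.rpow_le_rpow_of_nonpos ha hx (by linarith)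
  have h9 : 0 ≤ ‖y‖ ^ q := by positivity
  rw [h7] at h4
  have h10 := mul_le_mul_of_nonneg_left (mul_le_mul_of_nonneg_right h8 h9)
    (by positivity : 0 ≤ 2 * γ)
  linarith

lemma norm_sub_le_of_smooth {X : Type*} [NormedAddCommGroup X] [NormedSpace ℝ X]
    {L d d' : ℝ} {x y : X} {F : X →L[ℝ] ℝ} (hF : ‖F‖ ≤ 1)
    (hFx : (1 - d) * ‖x‖ - d' ≤ F x) (h : ‖x + y‖ + ‖x - y‖ ≤ 2 * ‖x‖ + L) :
    ‖x - y‖ ≤ (1 + d) * ‖x‖ + d' + L - F y := by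
  have h1 : F (x + y) ≤ ‖x + y‖ :=
    (le_abs_self _).trans (by simpa using F.le_of_opNorm_le hF (x + y))
  rw [map_add] at h1
  linarith

/-- For a fixed `h ∈ span D`, the values `F h` are controlled by `sup_D F` uniformly in `F`;
the constant is the `ℓ¹` norm of the coefficients of some representation of `h`. -/
lemma exists_abs_le_mul_sSup {X : Type*} [NormedAddCommGroup X] [NormedSpace ℝ X] {D : Set X}
    (hD : IsDictionary D) {h : X} (hh : h ∈ Submodule.span ℝ D) :
    ∃ A : ℝ, 0 ≤ A ∧ ∀ F : X →L[ℝ] ℝ, |F h| ≤ A * sSup ((fun g => F g) '' D) := by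
  have hle : ∀ F : X →L[ℝ] ℝ, ∀ g ∈ D, F g ≤ sSup ((fun g => F g) '' D) := by
    intro F g hg
    apply le_csSup
    · refine ⟨‖F‖, ?_⟩
      rintro _ ⟨v, hv, rfl⟩
      have := F.le_opNorm v
      rw [hD.1 v hv, mul_one] at this
      exact (le_abs_self _).trans this
    · exact ⟨g, hg, rfl⟩
  induction hh using Submodule.span_induction with
  | mem g hg =>
    refine ⟨1, zero_le_one, fun F => ?_⟩
    rw [one_mul, abs_le']
    refine ⟨hle F g hg, ?_⟩
    rw [← map_neg]
    exact hle F _ (hD.2.1 g hg)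
  | zero => exact ⟨0, le_rfl, fun F => by simp⟩
  | add v w _ _ hv hw =>
    obtain ⟨A, hA, hA'⟩ := hv
    obtain ⟨B, hB, hB'⟩ := hw
    refine ⟨A + B, by positivity, fun F => ?_⟩
    rw [map_add, add_mul]
    exact (abs_add_le _ _).trans (add_le_add (hA' F) (hB' F))
  | smul c v _ hv =>
    obtain ⟨A, hA, hA'⟩ := hv
    refine ⟨|c| * A, by positivity, fun F => ?_⟩
    rw [map_smul, smul_eq_mul, abs_mul, mul_assoc]
    exact mul_le_mul_of_nonneg_left (hA' F) (abs_nonneg c)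

lemma exists_pos_mul_rpow_le {q : ℝ} (hq : 1 < q) (C : ℝ) {ε : ℝ} (hε : 0 < ε) :
    ∃ s : ℝ, 0 < s ∧ C * s ^ q ≤ ε * s := by
  have h1 : Tendsto (fun s : ℝ => C * s ^ (q - 1)) (𝓝[>] 0) (𝓝 0) := by
    have h2 : ContinuousAt (fun s : ℝ => C * s ^ (q - 1)) 0 :=
      continuousAt_const.mul (Real.continuousAt_rpow_const _ _ (Or.inr (by linarith)))
    have h3 := h2.tendsto
    rw [Real.zero_rpow (by linarith), mul_zero] at h3
    exact h3.mono_left nhdsWithin_le_nhds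
  obtain ⟨s, hs, hs0⟩ := ((h1.eventually (gt_mem_nhds hε)).and self_mem_nhdsWithin).exists
  have hs0 : 0 < s := hs0
  refine ⟨s, hs0, ?_⟩
  have h4 : s ^ q = s ^ (q - 1) * s := by
    rw [← Real.rpow_add_one hs0.ne']
    simp
  rw [h4, ← mul_assoc]
  exact mul_le_mul_of_nonneg_right hs.le hs0.le

lemma summable_of_le_sub {b E : ℕ → ℝ} (hb : ∀ k, 0 ≤ b k) (hE : ∀ k, 0 ≤ E k) {κ : ℝ}
    (hκ : 0 < κ) (h : ∀ᶠ k in atTop, E (k + 1) ≤ E k - κ * b k) : Summable b := by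
  obtain ⟨m, hm⟩ := eventually_atTop.1 h
  rw [← summable_nat_add_iff m]
  refine summable_of_sum_range_le (c := E m / κ) (fun k => hb _) fun N => ?_
  have key : κ * ∑ i ∈ Finset.range N, b (i + m) ≤ E m - E (N + m) := by
    induction N with
    | zero => simp
    | succ N ih =>
      rw [Finset.sum_range_succ, mul_add]
      have := hm (N + m) (by omega)
      rw [show N + 1 + m = N + m + 1 by omega]
      linarith
  rw [le_div_iff₀ hκ]
  linarith [hE (N + m)]

/-- **Theorem 2, sufficiency.** Let `1 < q ≤ 2`, `p = q/(q−1)`.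
Suppose `sup_{n≥1} η_n < ∞`, `η'_n → 0`, and there is a strictly increasing sequence of
indices `n_k` with `Σ_k t_{n_k+1}^p = ∞`, `t'_{n_k+1} = o(t_{n_k+1})`,
`δ_{n_k} = o(t_{n_k+1}^p)`, `δ'_{n_k} = o(t_{n_k+1}^p)`, `η_{n_k} = o(t_{n_k+1}^p)`,
`η'_{n_k} = o(t_{n_k+1}^p)`.  Then for every real Banach space `X` with modulus of
smoothness `ρ(u) ≤ γ u^q` (`γ > 0`), every dictionary `D`, every `f ∈ X` and every
realization of the gAWCGA of `f`, one has `‖f_n‖ → 0`. -/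
theorem gAWCGA_converges_of_powerType
    (q p : ℝ) (hq1 : 1 < q) (hq2 : q ≤ 2) (hpq : p = q / (q - 1))
    (t t' δ δ' η η' : ℕ → ℝ)
    (ht0 : ∀ n, 0 ≤ t n) (ht1 : ∀ n, t n ≤ 1) (ht' : ∀ n, 0 ≤ t' n)
    (hδ : ∀ n, 0 ≤ δ n) (hδ' : ∀ n, 0 ≤ δ' n)
    (hη : ∀ n, 0 ≤ η n) (hη' : ∀ n, 0 ≤ η' n)
    (hηbdd : ∃ C : ℝ, ∀ n, 1 ≤ n → η n ≤ C)
    (hη'lim : Tendsto η' atTop (𝓝 0))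
    (hcond : ∃ nk : ℕ → ℕ, StrictMono nk ∧ (∀ k, 1 ≤ nk k) ∧
      (¬ Summable (fun k => t (nk k + 1) ^ p)) ∧
      (fun k => t' (nk k + 1)) =o[atTop] (fun k => t (nk k + 1)) ∧
      (fun k => δ (nk k)) =o[atTop] (fun k => t (nk k + 1) ^ p) ∧
      (fun k => δ' (nk k)) =o[atTop] (fun k => t (nk k + 1) ^ p) ∧
      (fun k => η (nk k)) =o[atTop] (fun k => t (nk k + 1) ^ p) ∧
      (fun k => η' (nk k)) =o[atTop] (fun k => t (nk k + 1) ^ p))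
    (X : Type*) [NormedAddCommGroup X] [NormedSpace ℝ X] [CompleteSpace X]
    (hX : ∃ γ > 0, ∀ u > 0, modS X u ≤ γ * u ^ q)
    (D : Set X) (hD : IsDictionary D) (f : X)
    (F : ℕ → X →L[ℝ] ℝ) (φ : ℕ → X) (G : ℕ → X)
    (hrel : IsGAWCGA D f t t' δ δ' η η' F φ G) :
    Tendsto (fun n => ‖f - G n‖) atTop (𝓝 0) := by
  obtain ⟨C, hC⟩ := hηbdd
  obtain ⟨nk, hmono, hnk1, hsum, ht'o, hδo, hδ'o, hηo, hη'o⟩ := hcond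
  obtain ⟨γ, hγ, hX⟩ := hX
  obtain ⟨-, hF, hφ, hG⟩ := hrel
  set V : ℕ → Submodule ℝ X := fun n => Submodule.span ℝ (φ '' Set.Icc 1 n) with hV
  set E : ℕ → ℝ := fun n => Metric.infDist f (V n : Set X) with hE
  have hE0 : ∀ n, 0 ≤ E n := fun n => Metric.infDist_nonneg
  have hVmono : Monotone V := fun m n hmn =>
    Submodule.span_mono (Set.image_mono (Set.Icc_subset_Icc_right hmn))
  have hEanti : Antitone E := fun m n hmn =>
    Metric.infDist_le_infDist_of_subset (hVmono hmn) ⟨0, (V m).zero_mem⟩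
  have hEle : ∀ n, ∀ g ∈ V n, E n ≤ ‖f - g‖ := fun n g hg => by
    rw [← dist_eq_norm]
    exact Metric.infDist_le_dist_of_mem hg
  have hEf : ∀ n, E n ≤ ‖f‖ := fun n => by simpa using hEle n 0 (V n).zero_mem
  have hbdd : BddBelow (Set.range E) := ⟨0, by rintro _ ⟨n, rfl⟩; exact hE0 n⟩
  have hlim := tendsto_atTop_ciInf hEanti hbdd
  have haE : ∀ n, (⨅ n, E n) ≤ E n := fun n => ciInf_le hbdd n
  have ha0 : 0 ≤ ⨅ n, E n := le_ciInf hE0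
  set a := ⨅ n, E n with ha
  have hGle : ∀ n, 1 ≤ n → ‖f - G n‖ ≤ (1 + η n) * E n + η' n := fun n hn => (hG n hn).2
  rcases ha0.eq_or_lt with ha0 | ha0
  · rw [← ha0] at hlim
    have h1 : Tendsto (fun n => (1 + C) * E n + η' n) atTop (𝓝 0) := by
      simpa using (hlim.const_mul (1 + C)).add hη'lim
    refine tendsto_of_tendsto_of_tendsto_of_le_of_le' tendsto_const_nhds h1
      (Eventually.of_forall fun n => norm_nonneg _) ?_
    filter_upwards [eventually_ge_atTop 1] with n hn
    have := mul_le_mul_of_nonneg_right (hC n hn) (hE0 n)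
    linarith [hGle n hn]
  exfalso
  apply hsum
  have hGa : ∀ n, 1 ≤ n → a ≤ ‖f - G n‖ := fun n hn =>
    (haE n).trans (hEle n _ (hG n hn).1)
  obtain ⟨b, hb⟩ := hη'lim.bddAbove_range
  have hM : ∃ M, ∀ n, 1 ≤ n → ‖f - G n‖ ≤ M := by
    refine ⟨‖f‖ + C * ‖f‖ + b, fun n hn => ?_⟩
    have h1 := hb ⟨n, rfl⟩
    have h2 := mul_le_mul (hC n hn) (hEf n) (hE0 n) ((hη n).trans (hC n hn))
    linarith [hGle n hn, hEf n]
  obtain ⟨M, hM⟩ := hM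
  have hp1 : 0 < p - 1 := by
    have : p - 1 = 1 / (q - 1) := by
      have : q - 1 ≠ 0 := by linarith
      rw [hpq]
      field_simp
      ring
    rw [this]
    exact one_div_pos.2 (by linarith)
  have hpq' : (p - 1) * q = p := by
    have : q - 1 ≠ 0 := by linarith
    rw [hpq]
    field_simp
    ring
  set K : ℝ := 2 * γ * a ^ (1 - q) with hK
  have hK0 : 0 < K := by positivity
  -- `e k` collects all perturbation and error terms at the step `n_k`.
  set e : ℕ → ℝ := fun k => M * δ (nk k) + ‖f‖ * η (nk k) + η' (nk k) + δ' (nk k) with he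
  have heo : e =o[atTop] (fun k => t (nk k + 1) ^ p) :=
    (((hδo.const_mul_left M).add (hηo.const_mul_left ‖f‖)).add hη'o).add hδ'o
  have hO : (fun k => t (nk k + 1) ^ p) =O[atTop] (fun _ => (1 : ℝ)) := by
    refine IsBigO.of_bound 1 (Eventually.of_forall fun k => ?_)
    rw [Real.norm_of_nonneg (Real.rpow_nonneg (ht0 _) _)]
    simpa using Real.rpow_le_one (ht0 _) (ht1 _) (by linarith : 0 ≤ p)
  have he0 : Tendsto e atTop (𝓝 0) := (isLittleO_one_iff ℝ).1 (heo.trans_isBigO hO)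
  have hδ0 : Tendsto (fun k => δ (nk k)) atTop (𝓝 0) :=
    (isLittleO_one_iff ℝ).1 (hδo.trans_isBigO hO)
  have hδ'0 : Tendsto (fun k => δ' (nk k)) atTop (𝓝 0) :=
    (isLittleO_one_iff ℝ).1 (hδ'o.trans_isBigO hO)
  have key : ∀ k y, ‖f - G (nk k) - y‖ ≤ E (nk k) + e k + K * ‖y‖ ^ q - F (nk k) y := by
    intro k y
    have h1 := norm_sub_le_of_smooth (hF (nk k)).1 (hF (nk k)).2
      (norm_add_add_norm_sub_le hq1 hγ hX ha0 (f - G (nk k)) y (hGa _ (hnk1 k)))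
    have h2 := mul_le_mul_of_nonneg_left (hM _ (hnk1 k)) (hδ (nk k))
    have h3 := mul_le_mul_of_nonneg_left (hEf (nk k)) (hη (nk k))
    have h4 := hGle _ (hnk1 k)
    simp only [he]
    linarith
  have hGlow : ∀ᶠ k in atTop, -(a / 8) ≤ F (nk k) (G (nk k)) := by
    obtain ⟨s, hs, hs'⟩ := exists_pos_mul_rpow_le hq1 (K * (‖f‖ + M) ^ q)
      (by positivity : 0 < a / 16)
    filter_upwards [he0.eventually (gt_mem_nhds (by positivity : 0 < s * (a / 16)))] with k hk
    have hGV : G (nk k) ∈ V (nk k) := (hG _ (hnk1 k)).1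
    have h1 := key k (-(s • G (nk k)))
    have h2 := hEle (nk k) (G (nk k) + -(s • G (nk k)))
      ((V _).add_mem hGV ((V _).neg_mem ((V _).smul_mem s hGV)))
    rw [← sub_sub] at h2
    have h3 : ‖G (nk k)‖ ≤ ‖f‖ + M := by
      have h4 := norm_sub_le f (f - G (nk k))
      rw [sub_sub_cancel] at h4
      linarith [hM _ (hnk1 k)]
    have h5 : ‖G (nk k)‖ ^ q ≤ (‖f‖ + M) ^ q :=
      Real.rpow_le_rpow (norm_nonneg _) h3 (by linarith)
    rw [norm_neg, norm_smul, Real.norm_of_nonneg hs.le,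
      Real.mul_rpow hs.le (norm_nonneg _), map_neg, map_smul, smul_eq_mul] at h1
    have h6 : K * (s ^ q * ‖G (nk k)‖ ^ q) ≤ K * (‖f‖ + M) ^ q * s ^ q := by
      have := mul_le_mul_of_nonneg_left h5 (by positivity : 0 ≤ K * s ^ q)
      linarith
    have h7 : s * -(a / 8) ≤ s * F (nk k) (G (nk k)) := by linarith
    exact le_of_mul_le_mul_left h7 hs
  obtain ⟨h, hhD, hfh⟩ := Metric.mem_closure_iff.1 (hD.2.2 f) (a / 4) (by positivity)
  obtain ⟨A, hA0, hA⟩ := exists_abs_le_mul_sSup hD hhD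
  have hFh : ∀ᶠ k in atTop, a / 4 ≤ F (nk k) h := by
    have hd : Tendsto (fun k => δ (nk k) * M + δ' (nk k)) atTop (𝓝 0) := by
      simpa using (hδ0.mul_const M).add hδ'0
    filter_upwards [hGlow, hd.eventually (gt_mem_nhds (by positivity : 0 < a / 8))] with k h1 h2
    have h3 := (hF (nk k)).2
    rw [map_sub] at h3
    have h4 := mul_le_mul_of_nonneg_left (hM _ (hnk1 k)) (hδ (nk k))
    have h5 := hGa _ (hnk1 k)
    have h6 : F (nk k) (f - h) ≤ ‖f - h‖ :=
      (le_abs_self _).trans (by simpa using (F (nk k)).le_of_opNorm_le (hF (nk k)).1 (f - h))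
    rw [map_sub, ← dist_eq_norm] at h6
    linarith
  -- `A + 1` replaces `A` to have a positive constant.
  set c : ℝ := a / 4 / (A + 1) with hc
  have hc0 : 0 < c := by positivity
  have hS : ∀ᶠ k in atTop, c ≤ sSup ((fun g => F (nk k) g) '' D) := by
    filter_upwards [hFh] with k hk
    have h1 := (hk.trans (le_abs_self _)).trans (hA (F (nk k)))
    have h2 : 0 ≤ sSup ((fun g => F (nk k) g) '' D) := by
      by_contra! hneg
      nlinarith
    rw [hc, div_le_iff₀ (by positivity)]
    linarith
  have hFφ : ∀ᶠ k in atTop, c / 2 * t (nk k + 1) ≤ F (nk k) (φ (nk k + 1)) := by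
    filter_upwards [hS, ht'o.bound (by positivity : 0 < c / 2)] with k h1 h2
    rw [Real.norm_of_nonneg (ht' _), Real.norm_of_nonneg (ht0 _)] at h2
    have h3 := (hφ (nk k)).2
    have h4 := mul_le_mul_of_nonneg_left h1 (ht0 (nk k + 1))
    linarith
  obtain ⟨μ, hμ, hμ'⟩ := exists_pos_mul_rpow_le hq1 K (by positivity : 0 < c / 8)
  refine summable_of_le_sub (E := fun k => E (nk k)) (κ := μ * c / 4)
    (fun k => Real.rpow_nonneg (ht0 _) _) (fun k => hE0 _) (by positivity) ?_
  filter_upwards [hFφ, heo.bound (by positivity : 0 < μ * c / 8)] with k h1 h2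
  have hT0 : 0 ≤ t (nk k + 1) ^ p := Real.rpow_nonneg (ht0 _) _
  have hτ0 : 0 ≤ t (nk k + 1) ^ (p - 1) := Real.rpow_nonneg (ht0 _) _
  rw [Real.norm_of_nonneg hT0] at h2
  have h2 := (le_abs_self _).trans h2
  have hτ1 : t (nk k + 1) ^ (p - 1) * t (nk k + 1) = t (nk k + 1) ^ p := by
    rw [← Real.rpow_add_one' (ht0 _) (by linarith)]
    simp
  have hτ2 : (t (nk k + 1) ^ (p - 1)) ^ q = t (nk k + 1) ^ p := by
    rw [← Real.rpow_mul (ht0 _), hpq']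
  have h3 := key k ((μ * t (nk k + 1) ^ (p - 1)) • φ (nk k + 1))
  rw [norm_smul, hD.1 _ (hφ (nk k)).1, mul_one, Real.norm_of_nonneg (by positivity),
    Real.mul_rpow hμ.le hτ0, hτ2, map_smul, smul_eq_mul] at h3
  have h4 : E (nk k + 1) ≤ ‖f - G (nk k) - (μ * t (nk k + 1) ^ (p - 1)) • φ (nk k + 1)‖ := by
    rw [sub_sub]
    refine hEle _ _ ((V _).add_mem (hVmono (Nat.le_succ _) (hG _ (hnk1 k)).1)
      ((V _).smul_mem _ (Submodule.subset_span ⟨nk k + 1, ⟨by omega, le_rfl⟩, rfl⟩)))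
  have h5 : E (nk (k + 1)) ≤ E (nk k + 1) := hEanti (hmono (Nat.lt_succ_self k))
  have h6 : μ * (c / 2) * t (nk k + 1) ^ p ≤
      μ * t (nk k + 1) ^ (p - 1) * F (nk k) (φ (nk k + 1)) := by
    have := mul_le_mul_of_nonneg_left h1 (mul_nonneg hμ.le hτ0)
    rw [← hτ1]
    linarith
  have h7 := mul_le_mul_of_nonneg_right hμ' hT0
  change E (nk (k + 1)) ≤ E (nk k) - _
  linarith
end

section
/- Let 1 < q ≤ 2 and p = q/(q−1). Suppose that at least one of the following fails: (a) sup_{n≥1} η_n < ∞ and η'_n → 0; (b) there exists a strictly increasing sequence of indices {n_k}_{k=1}^∞ such that Σ_{k=1}^∞ t_{n_k+1}^p = ∞, t'_{n_k+1} = o(t_{n_k+1}), δ_{n_k} = o(t_{n_k+1}^p), δ'_{n_k} = o(t_{n_k+1}^p), η_{n_k} = o(t_{n_k+1}^p), and η'_{n_k} = o(t_{n_k+1}^p). Then in the space X = ℓ_q there exist a dictionary D (one may take D = {±e_n}, the signed canonical basis of ℓ_q), an element f ∈ ℓ_q, and a realization of the gAWCGA of f with the given weakness, perturbation and error sequences such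 that ‖f_n‖_q does not converge to 0. -/
/-! The dictionary is the signed canonical basis `±e_j` of `ℓ_q`, and every remainder has the form
`r n + d n • e_0`, where `r n` is `f` with the coordinates chosen so far removed. The norming
functional of a nonnegative vector `z` is explicit, with coordinates `(z_j / ‖z‖) ^ (q - 1)`
(`exists_norming`), and `‖r n‖` is the distance from `f` to the span of the chosen vectors. So an
admissible run of the algorithm reduces to a few numerical inequalities (`realization`), and
everything depends on spending steps on the useless coordinate `0`.

* If `η'` does not tend to `0`, take `f = e_0` with remainders `η' n • e_0`
  (`diverges_of_not_tendsto`).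
* If `η` is unbounded, let the coordinates of `f` decrease so slowly that `1 ≤ η n * ‖r n‖` for
  infinitely many `n` (`exists_weights`); the remainder `r n + e_0` is then allowed at these `n`
  (`diverges_of_unbounded`).
* Otherwise, let `L k` be the set of `n ≥ 1` at which `t' (n + 1)` is at most
  `t (n + 1) / (k + 1)` and both `δ n + δ' n` and `η n + η' n` are at most
  `t (n + 1) ^ p / (k + 1)`. If `t (n + 1) ^ p` had infinite sum over every `L k`, gluing finite
  blocks would give a subsequence of the excluded kind (`exists_subseq_of_not_summable`). So the
  sum over some `L k` is finite, and `f` can carry one coordinate of size `b * t (n + 1) ^ (p / q)`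
  for each `n` in it, together with `N` coordinates of size `b` that should never be chosen.
  As `(p / q) * (q - 1) = 1`, the small coordinate is an admissible choice at its own step. At a
  step `n ≥ 1` outside `L k` the choice of `e_0` is admissible: a large `t' (n + 1)` allows any
  choice, a large `η n + η' n` allows a real component `b * t (n + 1) ^ (p / q)` at `e_0` in the
  remainder, and a large `δ n + δ' n` allows the functional to be that of such a remainder although
  the component is absent. For large `N` this component changes the norm by a relative amount of
  at most `t (n + 1) ^ p / (k + 1)`
  (`diverges_of_summable`). -/

open Filter Topology Asymptotics

/-- The sequence space `ℓ_q` over `ℝ`, indexed by `ℕ`. -/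
abbrev Lq (q : ℝ) : Type := lp (fun _ : ℕ => ℝ) (ENNReal.ofReal q)


/-! ### Vectors of `ℓ_q` and their norming functionals -/

/-- The unit vector `e_i` of `ℓ_q`. -/
noncomputable def unitVec (q : ℝ) (i : ℕ) : Lq q := lp.single _ i (1 : ℝ)

/-- The part of `f` supported off `P ∪ {0}`. -/
noncomputable def offPart {q : ℝ} (f : Lq q) (P : Finset ℕ) : Lq q :=
  f - ∑ j ∈ insert 0 P, lp.single _ j (f j)

section

variable {q : ℝ}

lemma unitVec_apply (i j : ℕ) : unitVec q i j = if j = i then 1 else 0 := by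
  simp [unitVec, lp.single_apply, Pi.single_apply]

lemma offPart_apply (f : Lq q) (P : Finset ℕ) (j : ℕ) :
    offPart f P j = if j = 0 ∨ j ∈ P then 0 else f j := by
  unfold offPart
  rw [lp.coeFn_sub, Pi.sub_apply, lp.coeFn_sum, Finset.sum_apply]
  simp only [lp.coeFn_single, Finset.sum_pi_single, Finset.mem_insert]
  split_ifs <;> simp

lemma toReal_ofReal_q (hq1 : 1 < q) : (ENNReal.ofReal q).toReal = q :=
  ENNReal.toReal_ofReal (by linarith)

lemma hasSum_norm_rpow (hq1 : 1 < q) (f : Lq q) :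
    HasSum (fun i => |f i| ^ q) (‖f‖ ^ q) := by
  have h := lp.hasSum_norm (p := ENNReal.ofReal q)
    (by rw [toReal_ofReal_q hq1]; linarith) f
  simpa only [toReal_ofReal_q hq1, Real.norm_eq_abs] using h

lemma norm_mono_of_abs_le (hq1 : 1 < q) {f g : Lq q} (h : ∀ j, |f j| ≤ |g j|) : ‖f‖ ≤ ‖g‖ := by
  have h1 : ‖f‖ ^ q ≤ ‖g‖ ^ q :=
    hasSum_le (fun j => Real.rpow_le_rpow (abs_nonneg _) (h j) (by linarith))
      (hasSum_norm_rpow hq1 f) (hasSum_norm_rpow hq1 g)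
  exact (Real.rpow_le_rpow_iff (lp.norm_nonneg' _) (lp.norm_nonneg' _) (by linarith)).1 h1

lemma norm_add_smul_unitVec_rpow (hq1 : 1 < q) (r : Lq q) (hr : r 0 = 0) {c : ℝ} (hc : 0 ≤ c) :
    ‖r + c • unitVec q 0‖ ^ q = ‖r‖ ^ q + c ^ q := by
  have h1 := hasSum_norm_rpow hq1 (r + c • unitVec q 0)
  have h2 := (hasSum_norm_rpow hq1 r).add (hasSum_ite_eq 0 (c ^ q))
  refine h1.unique ?_
  convert h2 using 2 with j
  rw [lp.coeFn_add, Pi.add_apply, lp.coeFn_smul, Pi.smul_apply, unitVec_apply]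
  by_cases hj : j = 0
  · subst hj
    simp [hr, abs_of_nonneg hc, Real.zero_rpow (by linarith : q ≠ 0)]
  · simp [hj]

lemma exists_lq (hq1 : 1 < q) (a : ℕ → ℝ) (ha : ∀ j, 0 ≤ a j)
    (hs : Summable fun j => a j ^ q) :
    ∃ f : Lq q, ∀ j, f j = a j := by
  refine ⟨⟨a, ?_⟩, fun j => rfl⟩
  refine memℓp_gen ?_
  simpa only [toReal_ofReal_q hq1, Real.norm_eq_abs, abs_of_nonneg (ha _)] using hs

/-- The norming functional of a nonnegative `z ∈ ℓ_q`: its coordinates are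
`z_i ^ (q - 1) / ‖z‖ ^ (q - 1)`. For `z = 0` this is the zero functional. -/
lemma exists_norming [Fact (1 ≤ ENNReal.ofReal q)] (hq1 : 1 < q) (z : Lq q)
    (hz : ∀ j, 0 ≤ z j) :
    ∃ F : Lq q →L[ℝ] ℝ, ‖F‖ ≤ 1 ∧ F z = ‖z‖ ∧
      ∀ i, F (unitVec q i) = z i ^ (q - 1) / ‖z‖ ^ (q - 1) := by
  have hq0 : q - 1 ≠ 0 := by linarith
  rcases eq_or_ne z 0 with rfl | hz0
  · refine ⟨0, by simp, by simp, fun i => ?_⟩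
    simp [Real.zero_rpow hq0]
  have hn : 0 < ‖z‖ := norm_pos_iff.2 hz0
  have hpq : (q / (q - 1)).HolderConjugate q := by
    have := (Real.HolderConjugate.conjExponent hq1).symm
    simpa [Real.conjExponent] using this
  set p := q / (q - 1) with hp
  have hp0 : 0 < p := hpq.pos
  have hmul : (q - 1) * p = q := by rw [hp]; field_simp
  have hzp : ∀ j, (z j ^ (q - 1) / ‖z‖ ^ (q - 1)) ^ p = z j ^ q / ‖z‖ ^ q := fun j => by
    rw [Real.div_rpow (Real.rpow_nonneg (hz j) _) (by positivity), ← Real.rpow_mul (hz j),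
      ← Real.rpow_mul hn.le, hmul]
  have hsum : HasSum (fun j => (z j ^ (q - 1) / ‖z‖ ^ (q - 1)) ^ p) 1 := by
    have h := (hasSum_norm_rpow hq1 z).div_const (‖z‖ ^ q)
    rw [div_self (by positivity)] at h
    simpa only [hzp, abs_of_nonneg (hz _)] using h
  have hpr : (ENNReal.ofReal p).toReal = p := ENNReal.toReal_ofReal hp0.le
  have hy0 : ∀ j, 0 ≤ z j ^ (q - 1) / ‖z‖ ^ (q - 1) := fun j =>
    div_nonneg (Real.rpow_nonneg (hz j) _) (by positivity)
  let y : lp (fun _ : ℕ => ℝ) (ENNReal.ofReal p) :=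
    ⟨fun j => z j ^ (q - 1) / ‖z‖ ^ (q - 1), memℓp_gen (by
      simpa only [hpr, Real.norm_eq_abs, abs_of_nonneg (hy0 _)] using hsum.summable)⟩
  have hyj : ∀ j, y j = z j ^ (q - 1) / ‖z‖ ^ (q - 1) := fun j => rfl
  have hynorm : ‖y‖ = 1 := by
    have h := lp.norm_eq_tsum_rpow (p := ENNReal.ofReal p) (by rw [hpr]; exact hp0) y
    simp only [hpr, Real.norm_eq_abs, hyj, abs_of_nonneg (hy0 _)] at h
    rw [h, hsum.tsum_eq, Real.one_rpow]
  have hH : (ENNReal.ofReal p).toReal.HolderConjugate (ENNReal.ofReal q).toReal := by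
    rw [hpr, toReal_ofReal_q hq1]; exact hpq
  have hS : ∀ x : Lq q, Summable fun j => y j * x j := fun x => by
    have := lp.summable_mul hH y x
    simp only [← norm_mul] at this
    exact this.of_norm
  let L : Lq q →ₗ[ℝ] ℝ :=
    { toFun := fun x => ∑' j, y j * x j
      map_add' := fun a b => by
        rw [← (hS a).tsum_add (hS b)]
        refine tsum_congr fun j => ?_
        rw [lp.coeFn_add, Pi.add_apply, mul_add]
      map_smul' := fun c a => by
        rw [RingHom.id_apply, smul_eq_mul, ← tsum_mul_left]
        refine tsum_congr fun j => ?_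
        rw [lp.coeFn_smul, Pi.smul_apply, smul_eq_mul]; ring }
  have hL : ∀ x, L x = ∑' j, y j * x j := fun x => rfl
  have hLb : ∀ x, ‖L x‖ ≤ 1 * ‖x‖ := fun x => by
    rw [hL, ← hynorm]
    refine le_trans ?_ (lp.tsum_mul_le_mul_norm' hH y x)
    simp only [← norm_mul]
    refine norm_tsum_le_tsum_norm ?_
    simpa only [norm_mul] using lp.summable_mul hH y x
  refine ⟨L.mkContinuous 1 hLb, L.mkContinuous_norm_le zero_le_one _, ?_, fun i => ?_⟩
  · rw [LinearMap.mkContinuous_apply, hL]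
    have h := (hasSum_norm_rpow hq1 z).div_const (‖z‖ ^ (q - 1))
    have e1 : ‖z‖ ^ q / ‖z‖ ^ (q - 1) = ‖z‖ := by
      rw [← Real.rpow_sub hn]; simp
    rw [e1] at h
    rw [← h.tsum_eq]
    refine tsum_congr fun j => ?_
    rw [hyj, abs_of_nonneg (hz j)]
    have : z j ^ q = z j ^ (q - 1) * z j := by
      rcases (hz j).eq_or_lt with h0 | h0
      · rw [← h0, Real.zero_rpow (by linarith)]; simp
      · rw [Real.rpow_sub_one h0.ne']; field_simp
    rw [this]; ring
  · rw [LinearMap.mkContinuous_apply, hL, tsum_eq_single i]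
    · rw [unitVec_apply, hyj]; simp
    · intro j hj
      rw [unitVec_apply]; simp [hj]

/-- The signed canonical basis is a dictionary of `ℓ_q`. -/
lemma isDictionary_signed_basis [Fact (1 ≤ ENNReal.ofReal q)] :
    IsDictionary {g : Lq q | ∃ i, g = unitVec q i ∨ g = -unitVec q i} := by
  have hq0 : (0 : ENNReal) < ENNReal.ofReal q := zero_lt_one.trans_le Fact.out
  have hn : ∀ i, ‖unitVec q i‖ = 1 := fun i => by
    rw [unitVec, lp.norm_single hq0]; simp
  refine ⟨?_, ?_, ?_⟩
  · rintro g ⟨i, rfl | rfl⟩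
    · exact hn i
    · rw [norm_neg, hn i]
  · rintro g ⟨i, rfl | rfl⟩
    · exact ⟨i, Or.inr rfl⟩
    · exact ⟨i, Or.inl (neg_neg _)⟩
  · intro x
    refine mem_closure_of_tendsto (lp.hasSum_single ENNReal.ofReal_ne_top x)
      (Filter.Eventually.of_forall fun s => ?_)
    refine Submodule.sum_mem _ fun i _ => ?_
    have : (lp.single (ENNReal.ofReal q) i (x i) : Lq q) = x i • unitVec q i := by
      rw [unitVec, ← lp.single_smul]; simp
    rw [this]
    exact Submodule.smul_mem _ _ (Submodule.subset_span ⟨i, Or.inl rfl⟩)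

/-! ### Realizations that pick canonical basis vectors -/

/-- A criterion for realizations. Here `e_{i 1}, e_{i 2}, …` are the chosen dictionary elements,
`f_n` is `f` off the chosen coordinates plus `d n • e_0`, and `F n` is the norming functional of
`f` off the chosen coordinates plus `c n • e_0`. The coordinate `0` is the first one chosen, and
so may carry an approximation error at every later step. -/
lemma realization [Fact (1 ≤ ENNReal.ofReal q)] (hq1 : 1 < q)
    {t t' δ δ' η η' : ℕ → ℝ} (ht0 : ∀ n, 0 ≤ t n)
    (ht' : ∀ n, 0 ≤ t' n) (hδ : ∀ n, 0 ≤ δ n) (hδ' : ∀ n, 0 ≤ δ' n) (hη : ∀ n, 0 ≤ η n)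
    (f : Lq q) (hf : ∀ j, 0 ≤ f j) (i : ℕ → ℕ) (hi : i 1 = 0) (c d : ℕ → ℝ)
    (hc : ∀ n, 0 ≤ c n) (hd0 : d 0 = f 0)
    (r z : ℕ → Lq q) (hr : ∀ n, r n = offPart f ((Finset.Icc 1 n).image i))
    (hz : ∀ n, z n = r n + c n • unitVec q 0)
    (H2 : ∀ n, d n = c n ∨
      (d n = 0 ∧ (1 - δ n) * ‖r n‖ - δ' n ≤ ‖r n‖ ^ q / ‖z n‖ ^ (q - 1)))
    (H3 : ∀ n j, t (n + 1) * z n j ^ (q - 1) - t' (n + 1) * ‖z n‖ ^ (q - 1)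
      ≤ z n (i (n + 1)) ^ (q - 1))
    (H4 : ∀ n, 1 ≤ n → ‖r n + d n • unitVec q 0‖ ≤ (1 + η n) * ‖r n‖ + η' n) :
    ∃ (D : Set (Lq q)) (F : ℕ → Lq q →L[ℝ] ℝ) (φ G : ℕ → Lq q),
      IsDictionary D ∧ IsGAWCGA D f t t' δ δ' η η' F φ G ∧
      ∀ n, f - G n = r n + d n • unitVec q 0 := by
  have hr0 : ∀ n, r n 0 = 0 := fun n => by rw [hr, offPart_apply]; simp
  have hzj : ∀ n j, z n j = r n j + c n * (if j = 0 then 1 else 0) := fun n j => by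
    rw [hz, lp.coeFn_add, Pi.add_apply, lp.coeFn_smul, Pi.smul_apply, unitVec_apply, smul_eq_mul]
  have hz0 : ∀ n j, 0 ≤ z n j := fun n j => by
    rw [hzj, hr, offPart_apply]
    have := hc n
    have := hf j
    split_ifs <;> simp_all
  have hz00 : ∀ n, z n 0 = c n := fun n => by rw [hzj, hr0]; simp
  choose F hF1 hF2 hF3 using fun n => exists_norming hq1 (z n) (hz0 n)
  have hK : ∀ n, 0 ≤ ‖z n‖ ^ (q - 1) := fun n => Real.rpow_nonneg (norm_nonneg _) _
  have hFpos : ∀ n k, 0 ≤ F n (unitVec q k) := fun n k => by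
    rw [hF3]; exact div_nonneg (Real.rpow_nonneg (hz0 n k) _) (hK n)
  refine ⟨_, F, fun n => unitVec q (i n), fun n => f - (r n + d n • unitVec q 0),
    isDictionary_signed_basis, ⟨?_, ?_, ?_, ?_⟩, fun n => sub_sub_cancel _ _⟩
  · rw [sub_eq_zero]
    ext j
    rw [lp.coeFn_add, Pi.add_apply, lp.coeFn_smul, Pi.smul_apply, unitVec_apply, hr, offPart_apply]
    by_cases hj : j = 0
    · subst hj; simp [hd0]
    · simp [hj]
  · intro n
    refine ⟨hF1 n, ?_⟩
    rw [sub_sub_cancel]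
    rcases H2 n with h | ⟨h, h2⟩
    · rw [h, ← hz, hF2]
      nlinarith [hδ n, hδ' n, norm_nonneg (z n)]
    · rw [h, zero_smul, add_zero]
      refine h2.trans (le_of_eq ?_)
      have e1 : r n = z n - c n • unitVec q 0 := by rw [hz]; abel
      have e2 : F n (r n) = ‖z n‖ - c n * (c n ^ (q - 1) / ‖z n‖ ^ (q - 1)) := by
        rw [e1, map_sub, map_smul, hF2, hF3, hz00, smul_eq_mul]
      rw [e2]
      rcases eq_or_ne (z n) 0 with h0 | h0
      · rw [h0, norm_zero, Real.zero_rpow (by linarith)]; simp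
      have hn : 0 < ‖z n‖ := norm_pos_iff.2 h0
      have e3 : ‖z n‖ ^ q = ‖r n‖ ^ q + c n ^ q := by
        rw [hz]; exact norm_add_smul_unitVec_rpow hq1 _ (hr0 n) (hc n)
      have e4 : ‖z n‖ ^ q = ‖z n‖ ^ (q - 1) * ‖z n‖ := by
        rw [Real.rpow_sub_one hn.ne']; field_simp
      have e5 : c n ^ q = c n ^ (q - 1) * c n := by
        rcases (hc n).eq_or_lt with h0 | h0
        · rw [← h0, Real.zero_rpow (by linarith)]; simp
        · rw [Real.rpow_sub_one h0.ne']; field_simp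
      have hp : 0 < ‖z n‖ ^ (q - 1) := Real.rpow_pos_of_pos hn _
      have e6 : ‖r n‖ ^ q = ‖z n‖ ^ (q - 1) * ‖z n‖ - c n ^ (q - 1) * c n := by linarith
      rw [e6]
      field_simp
  · intro n
    refine ⟨⟨_, Or.inl rfl⟩, ?_⟩
    have key : ∀ j, t (n + 1) * F n (unitVec q j) - t' (n + 1) ≤ F n (unitVec q (i (n + 1))) := by
      intro j
      rcases (hK n).eq_or_lt with h0 | h0
      · rw [hF3, hF3, ← h0]; simp [ht']
      · rw [hF3, hF3, le_div_iff₀ h0]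
        calc _ = t (n + 1) * z n j ^ (q - 1) - t' (n + 1) * ‖z n‖ ^ (q - 1) := by field_simp
          _ ≤ _ := H3 n j
    rcases (ht0 (n + 1)).eq_or_lt with h0 | h0
    · rw [← h0, zero_mul]
      linarith [ht' (n + 1), hFpos n (i (n + 1))]
    · have : sSup ((fun g => F n g) '' {g : Lq q | ∃ i, g = unitVec q i ∨ g = -unitVec q i})
          ≤ (F n (unitVec q (i (n + 1))) + t' (n + 1)) / t (n + 1) := by
        refine csSup_le ⟨_, _, ⟨0, Or.inl rfl⟩, rfl⟩ ?_
        rintro _ ⟨g, ⟨j, rfl | rfl⟩, rfl⟩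
        · rw [le_div_iff₀ h0]
          linarith [key j]
        · rw [le_div_iff₀ h0]
          have := mul_nonneg (hFpos n j) h0.le
          simp only [map_neg]
          linarith [ht' (n + 1), hFpos n (i (n + 1))]
      rw [le_div_iff₀ h0] at this
      linarith
  · intro n hn
    have hmem : 0 ∈ (Finset.Icc 1 n).image i :=
      Finset.mem_image.2 ⟨1, Finset.mem_Icc.2 ⟨le_rfl, hn⟩, hi⟩
    have hspan : ∀ k ∈ (Finset.Icc 1 n).image i,
        unitVec q k ∈ Submodule.span ℝ ((fun n => unitVec q (i n)) '' Set.Icc 1 n) := by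
      intro k hk
      obtain ⟨m, hm, rfl⟩ := Finset.mem_image.1 hk
      exact Submodule.subset_span ⟨m, Finset.mem_Icc.1 hm, rfl⟩
    constructor
    · have e1 : f - (r n + d n • unitVec q 0)
          = ∑ j ∈ (Finset.Icc 1 n).image i, f j • unitVec q j - d n • unitVec q 0 := by
        rw [hr, offPart, Finset.insert_eq_of_mem hmem]
        have : ∀ j, (lp.single (ENNReal.ofReal q) j (f j) : Lq q) = f j • unitVec q j := fun j => by
          rw [unitVec, ← lp.single_smul]; simp
        simp only [this]
        abel
      beta_reduce
      rw [e1]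
      exact Submodule.sub_mem _ (Submodule.sum_mem _ fun j hj =>
        Submodule.smul_mem _ _ (hspan j hj)) (Submodule.smul_mem _ _ (hspan 0 hmem))
    · rw [sub_sub_cancel]
      refine (H4 n hn).trans ?_
      have h1 : ‖r n‖ ≤ Metric.infDist f
          (Submodule.span ℝ ((fun n => unitVec q (i n)) '' Set.Icc 1 n) : Submodule ℝ (Lq q)) := by
        refine (Metric.le_infDist ⟨0, Submodule.zero_mem _⟩).2 ?_
        intro g hg
        rw [dist_eq_norm]
        have hgz : ∀ j, j ∉ (Finset.Icc 1 n).image i → g j = 0 := by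
          intro j hj
          induction hg using Submodule.span_induction with
          | mem x hx =>
            obtain ⟨m, hm, rfl⟩ := hx
            have : j ≠ i m := fun h => hj (Finset.mem_image.2 ⟨m, Finset.mem_Icc.2 hm, h.symm⟩)
            simp only [unitVec_apply, this, if_false]
          | zero => rfl
          | add x y _ _ hx hy => rw [lp.coeFn_add, Pi.add_apply, hx, hy, add_zero]
          | smul a x _ hx => rw [lp.coeFn_smul, Pi.smul_apply, hx, smul_zero]
        refine norm_mono_of_abs_le hq1 fun j => ?_
        rw [hr, offPart_apply]
        split_ifs with h
        · simp
        · rw [lp.coeFn_sub, Pi.sub_apply, hgz j (fun h' => h (Or.inr h')), sub_zero]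
      have := hη n
      gcongr

/-! ### Non-vanishing additive errors -/

lemma norm_unitVec [Fact (1 ≤ ENNReal.ofReal q)] (i : ℕ) : ‖unitVec q i‖ = 1 := by
  rw [unitVec, lp.norm_single (zero_lt_one.trans_le Fact.out)]; simp

/-- If `η' n` does not tend to `0`, then already `f = e_0` is not approximated: the remainders
`η' n • e_0` are admissible. -/
lemma diverges_of_not_tendsto [Fact (1 ≤ ENNReal.ofReal q)] (hq1 : 1 < q)
    {t t' δ δ' η η' : ℕ → ℝ} (ht0 : ∀ n, 0 ≤ t n) (ht1 : ∀ n, t n ≤ 1)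
    (ht' : ∀ n, 0 ≤ t' n) (hδ : ∀ n, 0 ≤ δ n) (hδ' : ∀ n, 0 ≤ δ' n) (hη : ∀ n, 0 ≤ η n)
    (hη' : ∀ n, 0 ≤ η' n) (h : ¬ Tendsto η' atTop (𝓝 0)) :
    ∃ (D : Set (Lq q)) (f : Lq q) (F : ℕ → Lq q →L[ℝ] ℝ) (φ G : ℕ → Lq q),
      IsDictionary D ∧ IsGAWCGA D f t t' δ δ' η η' F φ G ∧
      ¬ Tendsto (fun n => ‖f - G n‖) atTop (𝓝 0) := by
  have hr : ∀ P, offPart (unitVec q 0) P = 0 := fun P => by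
    ext j
    rw [offPart_apply, unitVec_apply]
    by_cases hj : j = 0 <;> simp [hj]
  let c : ℕ → ℝ := fun n => if n = 0 then 1 else η' n
  have hc : ∀ n, 0 ≤ c n := fun n => by
    simp only [c]; split_ifs; exacts [zero_le_one, hη' n]
  have hcn : ∀ n, ‖(0 : Lq q) + c n • unitVec q 0‖ = c n := fun n => by
    rw [zero_add, norm_smul, norm_unitVec, mul_one, Real.norm_eq_abs, abs_of_nonneg (hc n)]
  obtain ⟨D, F, φ, G, h1, h2, h3⟩ := realization hq1 ht0 ht' hδ hδ' hη (η' := η')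
    (unitVec q 0) (fun j => by rw [unitVec_apply]; split_ifs <;> simp) (fun _ => 0) rfl c c hc
    (by simp [c, unitVec_apply]) (fun _ => 0) (fun n => 0 + c n • unitVec q 0)
    (fun n => (hr _).symm) (fun n => rfl) (fun n => Or.inl rfl)
    (fun n j => by
      have h1 : 0 ≤ t' (n + 1) * ‖(0 : Lq q) + c n • unitVec q 0‖ ^ (q - 1) :=
        mul_nonneg (ht' _) (Real.rpow_nonneg (norm_nonneg _) _)
      have h2 : ∀ j, (0 + c n • unitVec q 0 : Lq q) j = c n * if j = 0 then 1 else 0 := fun j => by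
        rw [zero_add, lp.coeFn_smul, Pi.smul_apply, unitVec_apply, smul_eq_mul]
      rw [h2, h2]
      have h3 : 0 ≤ c n ^ (q - 1) := Real.rpow_nonneg (hc n) _
      by_cases hj : j = 0
      · simp only [hj, if_true, mul_one]
        nlinarith [ht1 (n + 1)]
      · simp only [hj, if_false, if_true, mul_one, mul_zero]
        rw [Real.zero_rpow (by linarith)]
        linarith)
    (fun n hn => by
      rw [hcn, norm_zero, mul_zero, zero_add]
      simp only [c]
      rw [if_neg (by omega)])
  refine ⟨D, _, F, φ, G, h1, h2, fun hT => h ?_⟩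
  refine hT.congr' ?_
  filter_upwards [eventually_ge_atTop 1] with n hn
  rw [h3, hcn]
  simp only [c]
  rw [if_neg (by omega)]

/-! ### Unbounded relative errors -/

lemma exists_large_of_unbounded {η : ℕ → ℝ} (hη : ∀ n, 0 ≤ η n)
    (h : ¬ ∃ C : ℝ, ∀ n, 1 ≤ n → η n ≤ C) (C : ℝ) (M : ℕ) :
    ∃ n, 1 ≤ n ∧ M ≤ n ∧ C < η n := by
  by_contra! H
  refine h ⟨|C| + ∑ m ∈ Finset.range M, η m, fun n hn => ?_⟩
  have h0 : 0 ≤ ∑ m ∈ Finset.range M, η m := Finset.sum_nonneg fun m _ => hη m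
  rcases le_or_gt M n with h1 | h1
  · linarith [H n hn h1, le_abs_self C]
  · have := Finset.single_le_sum (f := η) (fun m _ => hη m) (Finset.mem_range.2 h1)
    linarith [abs_nonneg C]

/-- A summable antitone sequence whose tail past `u i` is at least `2⁻¹ ^ (i + 1)`, for every `i`:
the sum over `i` of the step functions of mass `2⁻¹ ^ i` on `[0, 2 * u i)`. -/
lemma exists_weights (u : ℕ → ℕ) (hu : ∀ i, 1 ≤ u i) :
    ∃ w : ℕ → ℝ, Antitone w ∧ (∀ j, 0 ≤ w j) ∧ (∀ j, w j ≤ 1) ∧ Summable w ∧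
      ∀ i, (1 / 2 : ℝ) ^ (i + 1) ≤ ∑ j ∈ Finset.Ico (u i) (2 * u i), w j := by
  let a : ℕ → ℕ → ℝ := fun j i => if j < 2 * u i then (1 / 2 : ℝ) ^ i / (2 * u i) else 0
  have hu' : ∀ i, (1 : ℝ) ≤ u i := fun i => by exact_mod_cast hu i
  have ha0 : ∀ j i, 0 ≤ a j i := fun j i => by
    simp only [a]; split_ifs <;> positivity
  have ha1 : ∀ j i, a j i ≤ (1 / 2 : ℝ) ^ i / 2 := fun j i => by
    simp only [a]
    split_ifs
    · gcongr
      linarith [hu' i]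
    · positivity
  have hg : HasSum (fun i : ℕ => (1 / 2 : ℝ) ^ i) 2 := hasSum_geometric_two
  have hs : ∀ j, Summable (a j) := fun j =>
    Summable.of_nonneg_of_le (ha0 j) (ha1 j) (hg.summable.div_const 2)
  have hw0 : ∀ j, 0 ≤ ∑' i, a j i := fun j => tsum_nonneg (ha0 j)
  refine ⟨fun j => ∑' i, a j i, ?_, hw0, ?_, ?_, ?_⟩
  · intro j k hjk
    refine (hs k).tsum_le_tsum (fun i => ?_) (hs j)
    simp only [a]
    split_ifs
    · exact le_rfl
    · omega
    · positivity
    · exact le_rfl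
  · intro j
    refine ((hs j).tsum_le_tsum (ha1 j) (hg.summable.div_const 2)).trans (le_of_eq ?_)
    rw [(hg.div_const 2).tsum_eq]; norm_num
  · refine summable_of_sum_range_le (c := 2) hw0 fun J => ?_
    rw [← Summable.tsum_finsetSum fun j _ => hs j, ← hg.tsum_eq]
    refine Summable.tsum_le_tsum (fun i => ?_) (summable_sum fun j _ => hs j) hg.summable
    simp only [a]
    rw [← Finset.sum_filter, Finset.sum_const, nsmul_eq_mul]
    have : ((Finset.range J).filter (fun j => j < 2 * u i)).card ≤ 2 * u i := by
      refine (Finset.card_le_card (t := Finset.range (2 * u i)) fun j hj => ?_).trans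
        (Finset.card_range _).le
      exact Finset.mem_range.2 (Finset.mem_filter.1 hj).2
    have hc : (((Finset.range J).filter (fun j => j < 2 * u i)).card : ℝ) ≤ 2 * u i := by
      exact_mod_cast this
    have h1 := hu' i
    rw [mul_div_assoc', div_le_iff₀ (by linarith), mul_comm]
    gcongr
  · intro i
    have h1 := hu' i
    have h2 : ∀ j ∈ Finset.Ico (u i) (2 * u i), (1 / 2 : ℝ) ^ i / (2 * u i) ≤ ∑' k, a j k := by
      intro j hj
      refine le_trans (le_of_eq ?_) ((hs j).le_tsum i fun k _ => ha0 j k)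
      simp only [a]
      rw [if_pos (Finset.mem_Ico.1 hj).2]
    refine le_trans (le_of_eq ?_) (Finset.card_nsmul_le_sum _ _ _ h2)
    rw [Nat.card_Ico, nsmul_eq_mul, show 2 * u i - u i = u i by omega, pow_succ]
    field_simp

/-- If `η n` is unbounded: the coordinates of `f` decrease so slowly that, at infinitely many
steps `n`, the best error times `η n` is at least `1`. At these steps the error `e_0` is allowed,
and it makes the next step choose `e_0` again. -/
lemma diverges_of_unbounded [Fact (1 ≤ ENNReal.ofReal q)] (hq1 : 1 < q)
    {t t' δ δ' η η' : ℕ → ℝ} (ht0 : ∀ n, 0 ≤ t n) (ht1 : ∀ n, t n ≤ 1)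
    (ht' : ∀ n, 0 ≤ t' n) (hδ : ∀ n, 0 ≤ δ n) (hδ' : ∀ n, 0 ≤ δ' n) (hη : ∀ n, 0 ≤ η n)
    (hη' : ∀ n, 0 ≤ η' n) (h : ¬ ∃ C : ℝ, ∀ n, 1 ≤ n → η n ≤ C) :
    ∃ (D : Set (Lq q)) (f : Lq q) (F : ℕ → Lq q →L[ℝ] ℝ) (φ G : ℕ → Lq q),
      IsDictionary D ∧ IsGAWCGA D f t t' δ δ' η η' F φ G ∧
      ¬ Tendsto (fun n => ‖f - G n‖) atTop (𝓝 0) := by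
  classical
  choose u hu1 hu2 hu3 using fun i : ℕ => exists_large_of_unbounded hη h (2 ^ (i + 1)) i
  obtain ⟨w, hwa, hw0, hw1, hws, hwt⟩ := exists_weights u hu1
  have hq0 : 0 < q := by linarith
  have hwq : ∀ j, (w j ^ (1 / q)) ^ q = w j := fun j => by
    rw [← Real.rpow_mul (hw0 j), one_div_mul_cancel hq0.ne', Real.rpow_one]
  obtain ⟨f, hf⟩ := exists_lq hq1 (fun j => w j ^ (1 / q)) (fun j => Real.rpow_nonneg (hw0 j) _)
    (by simpa only [hwq] using hws)
  have hf0 : ∀ j, 0 ≤ f j := fun j => by rw [hf]; exact Real.rpow_nonneg (hw0 j) _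
  have hf1 : ∀ j, f j ≤ 1 := fun j => by
    rw [hf]; exact Real.rpow_le_one (hw0 j) (hw1 j) (by positivity)
  have hfa : ∀ {j k}, j ≤ k → f k ≤ f j := fun {j k} hjk => by
    rw [hf, hf]; exact Real.rpow_le_rpow (hw0 k) (hwa hjk) (by positivity)
  let S : ℕ → Prop := fun n =>
    1 ≤ n ∧ 1 ≤ η n * (∑ j ∈ Finset.Ico n (2 * n), w j) ^ (1 / q)
  have hS0 : ¬ S 0 := fun h => by simpa using h.1
  have hSinf : ∀ i, S (u i) := fun i => by
    refine ⟨hu1 i, ?_⟩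
    have hx0 : (0 : ℝ) < (1 / 2) ^ (i + 1) := by positivity
    have hx1 : ((1 : ℝ) / 2) ^ (i + 1) ≤ 1 := pow_le_one₀ (by norm_num) (by norm_num)
    have h1 : ((1 : ℝ) / 2) ^ (i + 1) ≤ (∑ j ∈ Finset.Ico (u i) (2 * u i), w j) ^ (1 / q) :=
      calc ((1 : ℝ) / 2) ^ (i + 1) = (((1 : ℝ) / 2) ^ (i + 1)) ^ (1 : ℝ) := by simp
        _ ≤ (((1 : ℝ) / 2) ^ (i + 1)) ^ (1 / q) := by
          refine Real.rpow_le_rpow_of_exponent_ge hx0 hx1 ?_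
          rw [div_le_one hq0]; exact hq1.le
        _ ≤ _ := Real.rpow_le_rpow hx0.le (hwt i) (by positivity)
    calc (1 : ℝ) = 2 ^ (i + 1) * (1 / 2) ^ (i + 1) := by rw [← mul_pow]; norm_num
      _ ≤ _ := mul_le_mul (hu3 i).le h1 hx0.le (hη _)
  -- `K n` is the number of coordinates chosen during the first `n` steps.
  let K : ℕ → ℕ := Nat.count fun n => ¬ S n
  have hK : ∀ n, K n ≤ n := fun n => Nat.count_le _
  have hKS : ∀ n, K (n + 1) = K n + if ¬ S n then 1 else 0 := Nat.count_succ _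
  have hK0 : K 0 = 0 := Nat.count_zero _
  have hKpos : ∀ n, 1 ≤ n → 1 ≤ K n := by
    intro n hn
    induction n, hn using Nat.le_induction with
    | base => rw [hKS 0, if_pos hS0]; omega
    | succ n _ ih => rw [hKS n]; omega
  let i : ℕ → ℕ := fun n => if S (n - 1) then 0 else K (n - 1)
  have hiS : ∀ n, i (n + 1) = if S n then 0 else K n := fun n => rfl
  have hP : ∀ n j, j ∈ (Finset.Icc 1 n).image i ↔ j < K n := by
    intro n
    induction n with
    | zero => intro j; simp [hK0]
    | succ n ih =>
      intro j
      have e : Finset.Icc 1 (n + 1) = insert (n + 1) (Finset.Icc 1 n) := by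
        ext m; simp only [Finset.mem_insert, Finset.mem_Icc]; omega
      rw [e, Finset.image_insert, Finset.mem_insert, ih, hiS, hKS]
      by_cases hn : S n
      · have := hKpos n hn.1
        simp only [hn, if_true, not_true, if_false]; omega
      · simp only [hn, if_false, not_false_eq_true, if_true]; omega
  let r : ℕ → Lq q := fun n => offPart f ((Finset.Icc 1 n).image i)
  have hr : ∀ n j, r n j = if j = 0 ∨ j < K n then 0 else f j := fun n j => by
    simp only [r]
    rw [offPart_apply]
    simp only [hP]
  let c : ℕ → ℝ := fun n => if n = 0 then f 0 else if S n then 1 else 0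
  have hc : ∀ n, 0 ≤ c n := fun n => by
    simp only [c]; split_ifs <;> simp [hf0]
  let z : ℕ → Lq q := fun n => r n + c n • unitVec q 0
  have hz : ∀ n j, z n j = r n j + c n * (if j = 0 then 1 else 0) := fun n j => by
    simp only [z]
    rw [lp.coeFn_add, Pi.add_apply, lp.coeFn_smul, Pi.smul_apply, unitVec_apply, smul_eq_mul]
  have hmax : ∀ n j, z n j ≤ z n (i (n + 1)) := by
    intro n j
    rw [hz, hz, hr, hr, hiS]
    rcases Nat.eq_zero_or_pos n with rfl | hn
    · simp only [hS0, if_false, hK0, c, if_true]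
      by_cases hj : j = 0
      · simp [hj]
      · simpa [hj] using hfa (Nat.zero_le j)
    · have h0 : n ≠ 0 := by omega
      by_cases hS : S n
      · simp only [hS, if_true, c, h0, if_false, true_or, one_mul, zero_add]
        split_ifs with h1 h2 h2
        · simp
        · simp
        · simp [h2] at h1
        · simpa using hf1 j
      · have := hKpos n hn
        have h1 : K n ≠ 0 := by omega
        simp only [hS, if_false, c, h0, zero_mul, add_zero, h1, lt_irrefl, or_self]
        split_ifs with h2
        · exact hf0 _
        · exact hfa (by omega)
  have hz0 : ∀ n j, 0 ≤ z n j := fun n j => by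
    rw [hz, hr]
    have := hc n
    have := hf0 j
    split_ifs <;> simp_all
  have hrS : ∀ n, S n → 1 ≤ η n * ‖r n‖ := by
    intro n hn
    refine hn.2.trans (mul_le_mul_of_nonneg_left ?_ (hη n))
    have h1 : ∑ j ∈ Finset.Ico n (2 * n), w j ≤ ‖r n‖ ^ q := by
      refine le_trans (le_of_eq (Finset.sum_congr rfl fun j hj => ?_))
        (sum_le_hasSum (Finset.Ico n (2 * n))
          (fun j _ => Real.rpow_nonneg (abs_nonneg _) _) (hasSum_norm_rpow hq1 (r n)))
      have h2 := (Finset.mem_Ico.1 hj).1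
      have h3 := hK n
      have h4 := hn.1
      rw [hr, if_neg (by omega), abs_of_nonneg (hf0 j), hf, hwq]
    calc _ ≤ (‖r n‖ ^ q) ^ (1 / q) :=
          Real.rpow_le_rpow (Finset.sum_nonneg fun j _ => hw0 j) h1 (by positivity)
      _ = ‖r n‖ := by
          rw [← Real.rpow_mul (norm_nonneg _), mul_one_div_cancel hq0.ne', Real.rpow_one]
  obtain ⟨D, F, φ, G, h1, h2, h3⟩ := realization hq1 ht0 ht' hδ hδ' hη (η' := η')
    f hf0 i (by rw [hiS 0, if_neg hS0, hK0]) c c hc (by simp [c]) r z (fun n => rfl)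
    (fun n => rfl) (fun n => Or.inl rfl)
    (fun n j => by
      have e1 : 0 ≤ t' (n + 1) * ‖z n‖ ^ (q - 1) :=
        mul_nonneg (ht' _) (Real.rpow_nonneg (norm_nonneg _) _)
      have e2 : z n j ^ (q - 1) ≤ z n (i (n + 1)) ^ (q - 1) :=
        Real.rpow_le_rpow (hz0 n j) (hmax n j) (by linarith)
      have e3 : 0 ≤ z n j ^ (q - 1) := Real.rpow_nonneg (hz0 n j) _
      nlinarith [ht1 (n + 1)])
    (fun n hn => by
      refine (norm_add_le _ _).trans ?_
      rw [norm_smul, norm_unitVec, mul_one, Real.norm_eq_abs, abs_of_nonneg (hc n)]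
      have e0 : n ≠ 0 := by omega
      have e1 := hη' n
      have e2 := mul_nonneg (hη n) (norm_nonneg (r n))
      by_cases hS : S n
      · have := hrS n hS
        simp only [c, e0, hS, if_false, if_true]
        linarith
      · simp only [c, e0, hS, if_false]
        linarith)
  refine ⟨D, f, F, φ, G, h1, h2, fun hT => ?_⟩
  obtain ⟨M, hM⟩ := eventually_atTop.1 (hT.eventually_lt_const zero_lt_one)
  have h4 := hM (u M) (hu2 M)
  have h5 := hu1 M
  have hc1 : c (u M) = 1 := by
    have e0 : u M ≠ 0 := by omega
    simp only [c, e0, hSinf M, if_false, if_true]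
  have h6 := norm_add_smul_unitVec_rpow hq1 (r (u M)) (by rw [hr]; simp) (hc (u M))
  rw [h3] at h4
  have h7 := Real.rpow_lt_one (norm_nonneg _) h4 hq0
  rw [h6, hc1, Real.one_rpow] at h7
  have := Real.rpow_nonneg (norm_nonneg (r (u M))) q
  linarith

/-! ### Failure of the condition on subsequences -/

/-- Gluing finite blocks: if `a` is not summable along any set of a decreasing sequence of sets,
then it is not summable along some subsequence that is eventually in each of these sets. -/
lemma exists_subseq_of_not_summable {a : ℕ → ℝ} (ha : ∀ n, 0 ≤ a n) {L : ℕ → Set ℕ}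
    (hL : Antitone L) (h : ∀ k, ¬ Summable ((L k).indicator a)) :
    ∃ nk : ℕ → ℕ, StrictMono nk ∧ ¬ Summable (fun m => a (nk m)) ∧ (∀ m, nk m ∈ L 0) ∧
      ∀ k, ∀ᶠ m in atTop, nk m ∈ L k := by
  classical
  have hblock : ∀ k M, ∃ M', M < M' ∧ 1 ≤ ∑ n ∈ Finset.Ico M M', (L k).indicator a n := by
    intro k M
    have hT := (not_summable_iff_tendsto_nat_atTop_of_nonneg
      (fun n => Set.indicator_nonneg (fun n _ => ha n) n)).1 (h k)
    obtain ⟨M', h1, h2⟩ := ((hT.eventually_ge_atTop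
      (∑ n ∈ Finset.range M, (L k).indicator a n + 1)).and (eventually_gt_atTop M)).exists
    refine ⟨M', h2, ?_⟩
    rw [Finset.sum_Ico_eq_sub _ h2.le]
    linarith
  choose B hB1 hB2 using hblock
  let M : ℕ → ℕ := Nat.rec 0 fun k m => B k m
  have hM : ∀ k, M (k + 1) = B k (M k) := fun k => rfl
  have hMm : StrictMono M := strictMono_nat_of_lt_succ fun k => by rw [hM]; exact hB1 _ _
  let S : ℕ → Prop := fun n => ∃ k, M k ≤ n ∧ n < M (k + 1) ∧ n ∈ L k
  have hSL : ∀ k n, S n → M k ≤ n → n ∈ L k := by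
    rintro k n ⟨l, h1, h2, h3⟩ hk
    have : k < l + 1 := hMm.lt_iff_lt.1 (hk.trans_lt h2)
    exact hL (by omega : k ≤ l) h3
  have hSns : ¬ Summable ((Set.ofPred S).indicator a) := by
    intro hs
    have hb : ∀ k : ℕ, (k : ℝ) ≤ ∑ n ∈ Finset.range (M k), (Set.ofPred S).indicator a n := by
      intro k
      induction k with
      | zero => simp [M]
      | succ k ih =>
        rw [← Finset.sum_range_add_sum_Ico _ (hMm (Nat.lt_succ_self k)).le]
        push_cast
        refine add_le_add ih ((hB2 k (M k)).trans (Finset.sum_le_sum fun n hn => ?_))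
        have hn' := Finset.mem_Ico.1 hn
        by_cases hnL : n ∈ L k
        · have : n ∈ Set.ofPred S := ⟨k, hn'.1, hn'.2, hnL⟩
          rw [Set.indicator_of_mem hnL, Set.indicator_of_mem this]
        · rw [Set.indicator_of_notMem hnL]
          exact Set.indicator_nonneg (fun n _ => ha n) n
    obtain ⟨k, hk⟩ := exists_nat_gt (∑' n, (Set.ofPred S).indicator a n)
    have := hs.sum_le_tsum (Finset.range (M k))
      (fun n _ => Set.indicator_nonneg (fun n _ => ha n) n)
    linarith [hb k]
  have hinf : (Set.ofPred S).Infinite := fun hfin =>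
    hSns (summable_of_hasFiniteSupport (hfin.subset Set.support_indicator_subset))
  have hmem : ∀ m, S (Nat.nth S m) := Nat.nth_mem_of_infinite hinf
  have hmono : StrictMono (Nat.nth S) := Nat.nth_strictMono hinf
  refine ⟨Nat.nth S, hmono, fun hs => hSns ?_, fun m => ?_, fun k => ?_⟩
  · refine (hmono.injective.summable_iff fun n hn => ?_).1 (hs.congr fun m => ?_)
    · rw [Nat.range_nth_of_infinite hinf] at hn
      exact Set.indicator_of_notMem hn a
    · exact (Set.indicator_of_mem (show Nat.nth S m ∈ Set.ofPred S from hmem m) a).symm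
  · exact hSL 0 _ (hmem m) (by simp [M])
  · filter_upwards [hmono.tendsto_atTop.eventually_ge_atTop (M k)] with m hm
    exact hSL k _ (hmem m) hm

lemma le_of_rpow_le (hq1 : 1 < q) {X Z u : ℝ} (hX : 0 ≤ X) (hZ : 0 ≤ Z) (hu : 0 ≤ u)
    (h : Z ^ q ≤ X ^ q * (1 + u)) : Z ≤ X * (1 + u) := by
  rw [← Real.rpow_le_rpow_iff hZ (by positivity) (by linarith : 0 < q),
    Real.mul_rpow hX (by linarith)]
  refine h.trans (mul_le_mul_of_nonneg_left ?_ (by positivity))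
  exact Real.self_le_rpow_of_one_le (by linarith) hq1.le

/-- If `Z ^ q ≤ X ^ q * (1 + u)`, then `X ^ q / Z ^ (q - 1)` is at least `(1 - u) * X`. With
`X = ‖r‖` and `Z = ‖r + c • e_0‖`, the quotient is the value at `r` of the norming functional of
`r + c • e_0`. Here `q ≤ 2` is used, in the form `q - 1 ≤ 1`. -/
lemma perturbed_norming_bound (hq1 : 1 < q) (hq2 : q ≤ 2) {X Z u : ℝ} (hX : 0 < X) (hZ : 0 < Z)
    (hu : 0 ≤ u) (h : Z ^ q ≤ X ^ q * (1 + u)) : (1 - u) * X ≤ X ^ q / Z ^ (q - 1) := by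
  have h1 := le_of_rpow_le hq1 hX.le hZ.le hu h
  rw [le_div_iff₀ (Real.rpow_pos_of_pos hZ _)]
  rcases le_or_gt 1 u with hu1 | hu1
  · have : (1 - u) * X * Z ^ (q - 1) ≤ 0 :=
      mul_nonpos_of_nonpos_of_nonneg (mul_nonpos_of_nonpos_of_nonneg (by linarith) hX.le)
        (by positivity)
    exact this.trans (by positivity)
  have h2 : Z ^ (q - 1) ≤ X ^ (q - 1) * (1 + u) :=
    calc Z ^ (q - 1) ≤ (X * (1 + u)) ^ (q - 1) := Real.rpow_le_rpow hZ.le h1 (by linarith)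
      _ = X ^ (q - 1) * (1 + u) ^ (q - 1) := Real.mul_rpow hX.le (by linarith)
      _ ≤ X ^ (q - 1) * (1 + u) := by
        refine mul_le_mul_of_nonneg_left ?_ (by positivity)
        exact Real.rpow_le_self_of_one_le (by linarith) (by linarith)
  have h3 : X ^ q = X ^ (q - 1) * X := by
    rw [Real.rpow_sub_one hX.ne']; field_simp
  have h4 : 0 < X ^ (q - 1) := Real.rpow_pos_of_pos hX _
  calc (1 - u) * X * Z ^ (q - 1) ≤ (1 - u) * X * (X ^ (q - 1) * (1 + u)) :=
        mul_le_mul_of_nonneg_left h2 (mul_nonneg (by linarith) hX.le)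
    _ = (1 - u ^ 2) * (X ^ (q - 1) * X) := by ring
    _ ≤ 1 * (X ^ (q - 1) * X) := by
        refine mul_le_mul_of_nonneg_right (by nlinarith) (by positivity)
    _ = X ^ q := by rw [h3, one_mul]

/-- The main construction. Let `L` be a set of steps along which `t (n + 1) ^ p` is summable, such
that at every step `n ≥ 1` outside `L` one of the parameters is not small compared with
`t (n + 1)` or `t (n + 1) ^ p`. The element `f` has `N` equal coordinates that are never chosen,
one more equal coordinate `0` which is chosen first and then again at every step outside `L`, and
one small coordinate for each step in `L`, chosen at that step. -/
lemma diverges_of_summable [Fact (1 ≤ ENNReal.ofReal q)] (hq1 : 1 < q) (hq2 : q ≤ 2)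
    {p : ℝ} (hpq : p = q / (q - 1))
    {t t' δ δ' η η' : ℕ → ℝ} (ht0 : ∀ n, 0 ≤ t n) (ht1 : ∀ n, t n ≤ 1)
    (ht' : ∀ n, 0 ≤ t' n) (hδ : ∀ n, 0 ≤ δ n) (hδ' : ∀ n, 0 ≤ δ' n) (hη : ∀ n, 0 ≤ η n)
    (hη' : ∀ n, 0 ≤ η' n) {ε : ℝ} (hε : 0 < ε) (L : Set ℕ)
    (hL : Summable (L.indicator fun n => t (n + 1) ^ p))
    (hLc : ∀ n, 1 ≤ n → n ∉ L → ε * t (n + 1) < t' (n + 1) ∨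
      ε * t (n + 1) ^ p < δ n + δ' n ∨ ε * t (n + 1) ^ p < η n + η' n) :
    ∃ (D : Set (Lq q)) (f : Lq q) (F : ℕ → Lq q →L[ℝ] ℝ) (φ G : ℕ → Lq q),
      IsDictionary D ∧ IsGAWCGA D f t t' δ δ' η η' F φ G ∧
      ¬ Tendsto (fun n => ‖f - G n‖) atTop (𝓝 0) := by
  classical
  have hq0 : 0 < q := by linarith
  have hq10 : 0 < q - 1 := by linarith
  have hp0 : 0 < p := by rw [hpq]; positivity
  have hpq0 : 0 < p / q := by positivity
  have hpq1 : p / q * (q - 1) = 1 := by rw [hpq]; field_simp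
  have hpqq : p / q * q = p := by field_simp
  obtain ⟨N, hN1, hN2, hN3⟩ : ∃ N : ℕ, 1 ≤ N ∧ 1 ≤ ε * N ∧ 1 ≤ ε * (N : ℝ) ^ ((q - 1) / q) := by
    have h1 : Tendsto (fun N : ℕ => ε * (N : ℝ)) atTop atTop :=
      tendsto_natCast_atTop_atTop.const_mul_atTop hε
    have h2 : Tendsto (fun N : ℕ => ε * (N : ℝ) ^ ((q - 1) / q)) atTop atTop :=
      ((tendsto_rpow_atTop (by positivity)).comp tendsto_natCast_atTop_atTop).const_mul_atTop hε
    obtain ⟨N, h⟩ := ((eventually_ge_atTop 1).and ((h1.eventually_ge_atTop 1).and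
      (h2.eventually_ge_atTop 1))).exists
    exact ⟨N, h⟩
  have hN0 : (0 : ℝ) < N := by exact_mod_cast hN1
  let τ : ℕ → ℝ := fun n => t (n + 1) ^ (p / q)
  have hτ0 : ∀ n, 0 ≤ τ n := fun n => Real.rpow_nonneg (ht0 _) _
  have hτ1 : ∀ n, τ n ≤ 1 := fun n => Real.rpow_le_one (ht0 _) (ht1 _) hpq0.le
  have hτq : ∀ n, τ n ^ q = t (n + 1) ^ p := fun n => by
    simp only [τ]; rw [← Real.rpow_mul (ht0 _), hpqq]
  have hτq1 : ∀ n, τ n ^ (q - 1) = t (n + 1) := fun n => by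
    simp only [τ]; rw [← Real.rpow_mul (ht0 _), hpq1, Real.rpow_one]
  let s : ℕ → ℝ := fun j => if j ≤ N then 1 else if j - N ∈ L then τ (j - N) else 0
  have hs0 : ∀ j, 0 ≤ s j := fun j => by
    simp only [s]; split_ifs; exacts [zero_le_one, hτ0 _, le_rfl]
  have hs1 : ∀ j, s j ≤ 1 := fun j => by
    simp only [s]; split_ifs; exacts [le_rfl, hτ1 _, zero_le_one]
  have hss : Summable fun j => s j ^ q := by
    rw [← summable_nat_add_iff (N + 1)]
    refine ((summable_nat_add_iff 1).2 hL).congr fun j => ?_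
    simp only [s]
    rw [if_neg (by omega), show j + (N + 1) - N = j + 1 by omega]
    by_cases hj : j + 1 ∈ L
    · rw [Set.indicator_of_mem hj, if_pos hj, hτq]
    · rw [Set.indicator_of_notMem hj, if_neg hj, Real.zero_rpow hq0.ne']
  -- The scale `b` makes `‖f‖ = 1`.
  let M : ℝ := ∑' j, s j ^ q
  have hM : 1 ≤ M := by
    have := hss.le_tsum 0 fun j _ => Real.rpow_nonneg (hs0 j) q
    have e : s 0 ^ q = 1 := by simp [s]
    exact le_of_eq_of_le e.symm this
  let b : ℝ := M⁻¹ ^ (1 / q)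
  have hb0 : 0 < b := Real.rpow_pos_of_pos (by positivity) _
  have hbq : b ^ q = M⁻¹ := by
    simp only [b]
    rw [← Real.rpow_mul (by positivity), one_div_mul_cancel hq0.ne', Real.rpow_one]
  have hbs : ∀ j, (b * s j) ^ q = M⁻¹ * s j ^ q := fun j => by
    rw [Real.mul_rpow hb0.le (hs0 j), hbq]
  obtain ⟨f, hf⟩ := exists_lq hq1 (fun j => b * s j) (fun j => mul_nonneg hb0.le (hs0 j))
    (by simpa only [hbs] using hss.mul_left M⁻¹)
  have hf0 : ∀ j, 0 ≤ f j := fun j => by rw [hf]; exact mul_nonneg hb0.le (hs0 j)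
  have hfb : ∀ j, f j ≤ b := fun j => by rw [hf]; exact mul_le_of_le_one_right hb0.le (hs1 j)
  have hfnorm : ‖f‖ ≤ 1 := by
    have h1 : ‖f‖ ^ q = 1 := by
      refine (hasSum_norm_rpow hq1 f).unique ?_
      have e : ∀ j, |f j| ^ q = M⁻¹ * s j ^ q := fun j => by
        rw [abs_of_nonneg (hf0 j), hf, hbs]
      simp only [e]
      have := hss.hasSum.mul_left M⁻¹
      rwa [show M⁻¹ * ∑' j, s j ^ q = 1 from inv_mul_cancel₀ (by positivity)] at this
    refine (Real.rpow_le_rpow_iff (norm_nonneg _) zero_le_one hq0).1 ?_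
    rw [h1, Real.one_rpow]
  let i : ℕ → ℕ := fun n => if n - 1 = 0 then 0 else if n - 1 ∈ L then N + (n - 1) else 0
  have hi : ∀ n, i (n + 1) = if n = 0 then 0 else if n ∈ L then N + n else 0 := fun n => rfl
  have hP : ∀ n j, j ≠ 0 → (j ≤ N ∨ N + n ≤ j) → j ∉ (Finset.Icc 1 n).image i := by
    intro n j h0 hj hmem
    obtain ⟨m, hm, rfl⟩ := Finset.mem_image.1 hmem
    have := Finset.mem_Icc.1 hm
    simp only [i] at h0 hj
    split_ifs at h0 hj <;> omega
  let r : ℕ → Lq q := fun n => offPart f ((Finset.Icc 1 n).image i)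
  have hr : ∀ n j, r n j = if j = 0 ∨ j ∈ (Finset.Icc 1 n).image i then 0 else f j :=
    fun n j => offPart_apply _ _ _
  have hrj : ∀ n j, j ≠ 0 → (j ≤ N ∨ N + n ≤ j) → r n j = f j := fun n j h0 hj => by
    rw [hr, if_neg (not_or.2 ⟨h0, hP n j h0 hj⟩)]
  have hr0 : ∀ n j, 0 ≤ r n j := fun n j => by
    rw [hr]; split_ifs; exacts [le_rfl, hf0 j]
  have hrf : ∀ n j, r n j ≤ f j := fun n j => by
    rw [hr]; split_ifs; exacts [hf0 j, le_rfl]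
  have hrnorm : ∀ n, ‖r n‖ ≤ 1 := fun n => by
    refine (norm_mono_of_abs_le hq1 fun j => ?_).trans hfnorm
    rw [abs_of_nonneg (hr0 n j), abs_of_nonneg (hf0 j)]
    exact hrf n j
  have hrlow : ∀ n, N * b ^ q ≤ ‖r n‖ ^ q := fun n => by
    refine le_trans (le_of_eq ?_) (sum_le_hasSum (Finset.Icc 1 N)
      (fun j _ => Real.rpow_nonneg (abs_nonneg _) _) (hasSum_norm_rpow hq1 (r n)))
    rw [Finset.sum_congr rfl (g := fun _ => b ^ q), Finset.sum_const, Nat.card_Icc, nsmul_eq_mul]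
    · simp
    · intro j hj
      have hj' := Finset.mem_Icc.1 hj
      rw [hrj n j (by omega) (Or.inl hj'.2), abs_of_nonneg (hf0 j), hf]
      simp only [s]
      rw [if_pos hj'.2, mul_one]
  have hbq0 : 0 < b ^ q := Real.rpow_pos_of_pos hb0 _
  have hrpos : ∀ n, 0 < ‖r n‖ := fun n => by
    refine (norm_nonneg _).lt_of_ne fun h0 => ?_
    have h1 := hrlow n
    rw [← h0, Real.zero_rpow hq0.ne'] at h1
    have := mul_pos hN0 hbq0
    linarith
  let c : ℕ → ℝ := fun n => if n = 0 then b else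
    if n ∈ L ∨ ε * t (n + 1) < t' (n + 1) then 0 else b * τ n
  let d : ℕ → ℝ := fun n => if n = 0 then b else
    if n ∈ L ∨ ε * t (n + 1) < t' (n + 1) ∨ ε * t (n + 1) ^ p < δ n + δ' n then 0 else b * τ n
  have hbτ : ∀ n, 0 ≤ b * τ n := fun n => mul_nonneg hb0.le (hτ0 n)
  have hc : ∀ n, 0 ≤ c n := fun n => by
    simp only [c]; split_ifs; exacts [hb0.le, le_rfl, hbτ n]
  have hcb : ∀ n, c n ≤ b := fun n => by
    simp only [c]; split_ifs
    exacts [le_rfl, hb0.le, mul_le_of_le_one_right hb0.le (hτ1 n)]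
  let z : ℕ → Lq q := fun n => r n + c n • unitVec q 0
  have hz : ∀ n j, z n j = if j = 0 then c n else r n j := fun n j => by
    simp only [z]
    rw [lp.coeFn_add, Pi.add_apply, lp.coeFn_smul, Pi.smul_apply, unitVec_apply, smul_eq_mul]
    by_cases hj : j = 0
    · subst hj; rw [hr]; simp
    · simp [hj]
  have hz0 : ∀ n j, 0 ≤ z n j := fun n j => by
    rw [hz]; split_ifs; exacts [hc n, hr0 n j]
  have hzb : ∀ n j, z n j ≤ b := fun n j => by
    rw [hz]; split_ifs; exacts [hcb n, (hrf n j).trans (hfb j)]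
  have hbump : ∀ n x, 0 ≤ x →
      ‖r n + x • unitVec q 0‖ ^ q = ‖r n‖ ^ q + x ^ q := fun n x hx =>
    norm_add_smul_unitVec_rpow hq1 (r n) (by rw [hr]; simp) hx
  -- Adding `b * τ n` at coordinate `0` multiplies the norm by at most `1 + u`.
  have hsmall : ∀ n u, ε * t (n + 1) ^ p ≤ u →
      ‖r n + (b * τ n) • unitVec q 0‖ ^ q ≤ ‖r n‖ ^ q * (1 + u) := fun n u hu => by
    rw [hbump n _ (hbτ n), Real.mul_rpow hb0.le (hτ0 n), hτq, mul_add, mul_one]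
    refine add_le_add le_rfl ?_
    have e1 : 0 ≤ t (n + 1) ^ p := Real.rpow_nonneg (ht0 _) _
    calc b ^ q * t (n + 1) ^ p = 1 * (b ^ q * t (n + 1) ^ p) := by ring
      _ ≤ ε * N * (b ^ q * t (n + 1) ^ p) := by gcongr
      _ = N * b ^ q * (ε * t (n + 1) ^ p) := by ring
      _ ≤ ‖r n‖ ^ q * u := by
        have := hrlow n
        gcongr
  have hH3 : ∀ n j, t (n + 1) * z n j ^ (q - 1) - t' (n + 1) * ‖z n‖ ^ (q - 1)
      ≤ z n (i (n + 1)) ^ (q - 1) := by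
    intro n j
    have e0 : 0 ≤ t' (n + 1) * ‖z n‖ ^ (q - 1) :=
      mul_nonneg (ht' _) (Real.rpow_nonneg (norm_nonneg _) _)
    have e1 : z n j ^ (q - 1) ≤ b ^ (q - 1) := Real.rpow_le_rpow (hz0 n j) (hzb n j) hq10.le
    have e2 : t (n + 1) * z n j ^ (q - 1) ≤ t (n + 1) * b ^ (q - 1) :=
      mul_le_mul_of_nonneg_left e1 (ht0 _)
    have e3 : 0 < b ^ (q - 1) := Real.rpow_pos_of_pos hb0 _
    have e4 : (b * τ n) ^ (q - 1) = t (n + 1) * b ^ (q - 1) := by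
      rw [Real.mul_rpow hb0.le (hτ0 n), hτq1, mul_comm]
    rw [hi]
    rcases Nat.eq_zero_or_pos n with rfl | hn
    · rw [if_pos rfl, hz 0 0, if_pos rfl]
      simp only [c, if_true]
      nlinarith [ht1 (0 + 1)]
    have hn0 : n ≠ 0 := by omega
    rw [if_neg hn0]
    by_cases hnL : n ∈ L
    · rw [if_pos hnL, hz n (N + n), if_neg (by omega), hrj n _ (by omega) (Or.inr le_rfl), hf]
      simp only [s]
      rw [if_neg (by omega), show N + n - N = n by omega, if_pos hnL, e4]
      linarith
    rw [if_neg hnL, hz n 0, if_pos rfl]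
    by_cases htt : ε * t (n + 1) < t' (n + 1)
    · refine le_trans ?_ (Real.rpow_nonneg (hc n) _)
      have e5 : ‖r n‖ ≤ ‖z n‖ := by
        refine norm_mono_of_abs_le hq1 fun j => ?_
        rw [abs_of_nonneg (hr0 n j), abs_of_nonneg (hz0 n j), hz]
        split_ifs with hj
        · rw [hj, hr]; simpa using hc n
        · exact le_rfl
      have e6 : b ^ (q - 1) ≤ ε * ‖r n‖ ^ (q - 1) := by
        have h1 := Real.rpow_le_rpow (mul_pos hN0 hbq0).le (hrlow n)
          (by positivity : 0 ≤ (q - 1) / q)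
        rw [Real.mul_rpow hN0.le hbq0.le, ← Real.rpow_mul hb0.le,
          ← Real.rpow_mul (norm_nonneg _), mul_div_cancel₀ _ hq0.ne'] at h1
        calc b ^ (q - 1) = 1 * b ^ (q - 1) := (one_mul _).symm
          _ ≤ ε * (N : ℝ) ^ ((q - 1) / q) * b ^ (q - 1) := by gcongr
          _ = ε * ((N : ℝ) ^ ((q - 1) / q) * b ^ (q - 1)) := by ring
          _ ≤ _ := by gcongr
      have e7 : ‖r n‖ ^ (q - 1) ≤ ‖z n‖ ^ (q - 1) :=
        Real.rpow_le_rpow (norm_nonneg _) e5 hq10.le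
      have e8 : t (n + 1) * b ^ (q - 1) ≤ t' (n + 1) * ‖z n‖ ^ (q - 1) :=
        calc t (n + 1) * b ^ (q - 1) ≤ t (n + 1) * (ε * ‖r n‖ ^ (q - 1)) :=
              mul_le_mul_of_nonneg_left e6 (ht0 _)
          _ = ε * t (n + 1) * ‖r n‖ ^ (q - 1) := by ring
          _ ≤ t' (n + 1) * ‖z n‖ ^ (q - 1) :=
              mul_le_mul htt.le e7 (Real.rpow_nonneg (norm_nonneg _) _) (ht' _)
      linarith
    · have : c n = b * τ n := by simp only [c, hn0, hnL, htt, if_false, or_self]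
      rw [this, e4]
      linarith
  have hH2 : ∀ n, d n = c n ∨
      (d n = 0 ∧ (1 - δ n) * ‖r n‖ - δ' n ≤ ‖r n‖ ^ q / ‖z n‖ ^ (q - 1)) := by
    intro n
    by_cases hn0 : n = 0
    · left; simp only [c, d, hn0, if_true]
    by_cases h1 : n ∈ L ∨ ε * t (n + 1) < t' (n + 1)
    · left
      have : n ∈ L ∨ ε * t (n + 1) < t' (n + 1) ∨ ε * t (n + 1) ^ p < δ n + δ' n := by tauto
      simp only [c, d]
      rw [if_neg hn0, if_neg hn0, if_pos h1, if_pos this]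
    have hcn : c n = b * τ n := by
      simp only [c]; rw [if_neg hn0, if_neg h1]
    by_cases h2 : ε * t (n + 1) ^ p < δ n + δ' n
    · right
      refine ⟨by simp only [d]; rw [if_neg hn0, if_pos (Or.inr (Or.inr h2))], ?_⟩
      have hZ := hsmall n _ h2.le
      rw [← hcn] at hZ
      have hzpos : 0 < ‖z n‖ := by
        refine (norm_nonneg _).lt_of_ne fun h0 => ?_
        have e1 : ‖z n‖ ^ q = ‖r n‖ ^ q + c n ^ q := hbump n _ (hc n)
        rw [← h0, Real.zero_rpow hq0.ne'] at e1
        have e2 := Real.rpow_pos_of_pos (hrpos n) q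
        have e3 := Real.rpow_nonneg (hc n) q
        linarith
      refine le_trans ?_ (perturbed_norming_bound hq1 hq2 (hrpos n) hzpos
        (add_nonneg (hδ n) (hδ' n)) hZ)
      nlinarith [hδ' n, hrnorm n]
    · left
      rw [hcn]
      simp only [d]
      rw [if_neg hn0, if_neg (by tauto)]
  have hH4 : ∀ n, 1 ≤ n → ‖r n + d n • unitVec q 0‖ ≤ (1 + η n) * ‖r n‖ + η' n := by
    intro n hn
    have hn0 : n ≠ 0 := by omega
    by_cases h1 : n ∈ L ∨ ε * t (n + 1) < t' (n + 1) ∨ ε * t (n + 1) ^ p < δ n + δ' n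
    · have : d n = 0 := by simp only [d]; rw [if_neg hn0, if_pos h1]
      rw [this, zero_smul, add_zero]
      nlinarith [hη n, hη' n, norm_nonneg (r n)]
    · have hdn : d n = b * τ n := by simp only [d]; rw [if_neg hn0, if_neg h1]
      have h2 : ε * t (n + 1) ^ p < η n + η' n := by
        have := hLc n hn (fun h => h1 (Or.inl h))
        tauto
      rw [hdn]
      refine (le_of_rpow_le hq1 (norm_nonneg _) (norm_nonneg _)
        (add_nonneg (hη n) (hη' n)) (hsmall n _ h2.le)).trans ?_
      nlinarith [hη' n, hrnorm n]
  have hd : ∀ n, 0 ≤ d n := fun n => by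
    simp only [d]; split_ifs; exacts [hb0.le, le_rfl, hbτ n]
  obtain ⟨D, F, φ, G, h1, h2, h3⟩ := realization hq1 ht0 ht' hδ hδ' hη (η' := η')
    f hf0 i rfl c d hc (by rw [hf]; simp [d, s]) r z (fun n => rfl) (fun n => rfl) hH2 hH3 hH4
  refine ⟨D, f, F, φ, G, h1, h2, fun hT => ?_⟩
  have hT' : Tendsto (fun n => ‖f - G n‖ ^ q) atTop (𝓝 0) := by
    have := hT.rpow_const (p := q) (Or.inr hq0.le)
    rwa [Real.zero_rpow hq0.ne'] at this
  have hlow : ∀ n, N * b ^ q ≤ ‖f - G n‖ ^ q := fun n => by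
    rw [h3, hbump n _ (hd n)]
    linarith [hrlow n, Real.rpow_nonneg (hd n) q]
  have := ge_of_tendsto' hT' hlow
  have := mul_pos hN0 hbq0
  linarith

end

/-- **Theorem 2, necessity.** Let `1 < q ≤ 2`, `p = q/(q−1)`.
If it fails that [`sup_{n≥1} η_n < ∞` and `η'_n → 0` and there is a strictly
increasing sequence of indices `n_k` with `Σ_k t_{n_k+1}^p = ∞`,
`t'_{n_k+1} = o(t_{n_k+1})`, `δ_{n_k} = o(t_{n_k+1}^p)`, `δ'_{n_k} = o(t_{n_k+1}^p)`,
`η_{n_k} = o(t_{n_k+1}^p)`, `η'_{n_k} = o(t_{n_k+1}^p)`], then in `X = ℓ_q` there exist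
a dictionary `D`, an element `f`, and a realization of the gAWCGA of `f` whose
remainders do not tend to `0` in norm. -/
theorem gAWCGA_diverges_in_lq_of_conditions_fail
    (q p : ℝ) (hq1 : 1 < q) (hq2 : q ≤ 2) (hpq : p = q / (q - 1))
    [Fact (1 ≤ ENNReal.ofReal q)]
    (t t' δ δ' η η' : ℕ → ℝ)
    (ht0 : ∀ n, 0 ≤ t n) (ht1 : ∀ n, t n ≤ 1) (ht' : ∀ n, 0 ≤ t' n)
    (hδ : ∀ n, 0 ≤ δ n) (hδ' : ∀ n, 0 ≤ δ' n)
    (hη : ∀ n, 0 ≤ η n) (hη' : ∀ n, 0 ≤ η' n)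
    (hfail : ¬ ((∃ C : ℝ, ∀ n, 1 ≤ n → η n ≤ C) ∧
      Tendsto η' atTop (𝓝 0) ∧
      ∃ nk : ℕ → ℕ, StrictMono nk ∧ (∀ k, 1 ≤ nk k) ∧
        (¬ Summable (fun k => t (nk k + 1) ^ p)) ∧
        (fun k => t' (nk k + 1)) =o[atTop] (fun k => t (nk k + 1)) ∧
        (fun k => δ (nk k)) =o[atTop] (fun k => t (nk k + 1) ^ p) ∧
        (fun k => δ' (nk k)) =o[atTop] (fun k => t (nk k + 1) ^ p) ∧
        (fun k => η (nk k)) =o[atTop] (fun k => t (nk k + 1) ^ p) ∧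
        (fun k => η' (nk k)) =o[atTop] (fun k => t (nk k + 1) ^ p))) :
    ∃ (D : Set (Lq q)) (f : Lq q) (F : ℕ → Lq q →L[ℝ] ℝ) (φ G : ℕ → Lq q),
      IsDictionary D ∧ IsGAWCGA D f t t' δ δ' η η' F φ G ∧
      ¬ Tendsto (fun n => ‖f - G n‖) atTop (𝓝 0) := by
  by_cases hA : ∃ C : ℝ, ∀ n, 1 ≤ n → η n ≤ C
  swap
  · exact diverges_of_unbounded hq1 ht0 ht1 ht' hδ hδ' hη hη' hA
  by_cases hB : Tendsto η' atTop (𝓝 0)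
  swap
  · exact diverges_of_not_tendsto hq1 ht0 ht1 ht' hδ hδ' hη hη' hB
  -- The steps at which all parameters are small at level `1 / (k + 1)`.
  let L : ℕ → Set ℕ := fun k => {n | 1 ≤ n ∧
    t' (n + 1) ≤ 1 / ((k : ℝ) + 1) * t (n + 1) ∧
    δ n + δ' n ≤ 1 / ((k : ℝ) + 1) * t (n + 1) ^ p ∧
    η n + η' n ≤ 1 / ((k : ℝ) + 1) * t (n + 1) ^ p}
  have htp : ∀ n, 0 ≤ t (n + 1) ^ p := fun n => Real.rpow_nonneg (ht0 _) _
  by_cases hC : ∃ k, Summable ((L k).indicator fun n => t (n + 1) ^ p)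
  · obtain ⟨k, hk⟩ := hC
    refine diverges_of_summable hq1 hq2 hpq ht0 ht1 ht' hδ hδ' hη hη'
      (by positivity : (0 : ℝ) < 1 / ((k : ℝ) + 1)) (L k) hk fun n hn hnL => ?_
    by_contra! H
    exact hnL ⟨hn, H.1, H.2.1, H.2.2⟩
  · have hLa : Antitone L := by
      rintro k l hkl n ⟨h1, h2, h3, h4⟩
      have hkl' : 1 / ((l : ℝ) + 1) ≤ 1 / ((k : ℝ) + 1) := by gcongr
      exact ⟨h1, h2.trans (mul_le_mul_of_nonneg_right hkl' (ht0 _)),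
        h3.trans (mul_le_mul_of_nonneg_right hkl' (htp n)),
        h4.trans (mul_le_mul_of_nonneg_right hkl' (htp n))⟩
    obtain ⟨nk, hm, hns, hL0, hev⟩ :=
      exists_subseq_of_not_summable htp hLa (not_exists.1 hC)
    have hlittle : ∀ x y : ℕ → ℝ, (∀ n, 0 ≤ x n) → (∀ n, 0 ≤ y n) →
        (∀ k n, n ∈ L k → x n ≤ 1 / ((k : ℝ) + 1) * y n) →
        (fun m => x (nk m)) =o[atTop] fun m => y (nk m) := by
      intro x y hx hy hxy
      refine IsLittleO.of_bound fun c hc => ?_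
      obtain ⟨k, hk⟩ := exists_nat_one_div_lt hc
      filter_upwards [hev k] with m hmk
      rw [Real.norm_eq_abs, Real.norm_eq_abs, abs_of_nonneg (hx _), abs_of_nonneg (hy _)]
      exact (hxy k _ hmk).trans (mul_le_mul_of_nonneg_right hk.le (hy _))
    refine absurd ⟨hA, hB, nk, hm, fun m => (hL0 m).1, hns, ?_, ?_, ?_, ?_, ?_⟩ hfail
    · exact hlittle (fun n => t' (n + 1)) (fun n => t (n + 1)) (fun n => ht' _) (fun n => ht0 _)
        fun k n h => h.2.1
    · exact hlittle δ (fun n => t (n + 1) ^ p) hδ htp fun k n h => by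
        linarith [h.2.2.1, hδ' n]
    · exact hlittle δ' (fun n => t (n + 1) ^ p) hδ' htp fun k n h => by
        linarith [h.2.2.1, hδ n]
    · exact hlittle η (fun n => t (n + 1) ^ p) hη htp fun k n h => by
        linarith [h.2.2.2, hη' n]
    · exact hlittle η' (fun n => t (n + 1) ^ p) hη' htp fun k n h => by
        linarith [h.2.2.2, hη n]
end

section
/- Let 1 < q ≤ 2, p = q/(q−1). Assume Σ_{n=1}^∞ t'_n < ∞, Σ_{n=0}^∞ δ_n < ∞, Σ_{n=0}^∞ δ'_n < ∞, Σ_{n=1}^∞ η_n < ∞, and Σ_{n=1}^∞ η'_n < ∞. Then the following are equivalent: (i) Σ_{n=1}^∞ t_n^p = ∞; (ii) for every real Banach space X whose modulus of smoothness satisfies ρ(u) ≤ γ u^q for some γ > 0, every dictionary D in X, every f ∈ X, and every realization of the gAWCGA of f with these weakness, perturbation and error sequences, ‖f_n‖ → 0. Moreover, if (i) fails then there exist a dictionary D in ℓ_q, an element f ∈ ℓ_q, and a realization of the gAWCGA of f with ‖f_n‖_q not converging to 0. -/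
/-!
**Divergence of `Σ t_n^p` forces convergence.** Let `E_n` be the distance from `f` to `Φ_n`. It
decreases to some `α`, and `‖f_n‖ → α` because the errors `η_n`, `η'_n` vanish. Suppose `α > 0`.
Smoothness (`smooth_ineq_of_le`), combined with `‖f_n + y‖ ≥ F_n(f_n) + F_n(y)`, gives for every `y`
  `(1 - δ_n)‖f_n‖ - δ'_n + F_n(y) + ‖f_n - y‖ ≤ 2‖f_n‖ + B‖y‖^q`.
Taking for `y` a small multiple of `-G_n`, for which `‖f_n - y‖ ≥ E_n`, shows that
`liminf F_n(G_n) ≥ 0`: this replaces the orthogonality `F_n(Φ_n) = 0` of the exact algorithm. So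
`F_n(f)` stays above `α/2`, and since `f` is within `α/4` of a fixed finite combination of the
dictionary, `sup_D F_n ≥ θ` for some `θ > 0` and all large `n` (`span_bound`). Taking next
`y = c t_{n+1}^{1/(q-1)} φ_{n+1}` with `c` small, for which `‖f_n - y‖ ≥ E_{n+1}`, yields
  `(cθ/2) t_{n+1}^p ≤ E_n - E_{n+1} + (summable error)`,
and telescoping contradicts the divergence of `Σ t_n^p`.

**Convergence of `Σ t_n^p` permits divergence.** In `ℓ_q` take the dictionary `{±e_n}` and
`f = e_0 + Σ_{n ≥ 1} t_n^{1/(q-1)} e_n`, which lies in `ℓ_q` exactly because `Σ t_n^p < ∞`. The norming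
functional of `f_n` takes on `e_i` a value proportional to the `(q-1)`-th power of the `i`-th
coordinate of `f_n`, so its supremum over the dictionary is attained at `e_0`, and `e_{n+1}` attains
the fraction `t_{n+1}` of it. The algorithm may thus choose `φ_n = e_n` for ever, with no errors at
all, and never removes the coordinate at `e_0` (`exists_divergent`). As `ℓ_q` has modulus of smoothness
at most `u^q` (`modS_lp_le`, through a Clarkson-type inequality), it is one of the admissible spaces.
-/

open Filter Topology Asymptotics

/-! ### Consequences of uniform smoothness -/

/-- Homogeneous form of the smoothness assumption, for vectors of arbitrary norm. -/
theorem smooth_ineq {X : Type*} [NormedAddCommGroup X] [NormedSpace ℝ X] {q γ : ℝ} (hγ : 0 ≤ γ)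
    (h : ∀ u > 0, modS X u ≤ γ * u ^ q) (x y : X) (hx : x ≠ 0) :
    ‖x + y‖ + ‖x - y‖ ≤ 2 * ‖x‖ * (1 + γ * (‖y‖ / ‖x‖) ^ q) := by
  have hx' : 0 < ‖x‖ := norm_pos_iff.2 hx
  rcases eq_or_ne y 0 with rfl | hy
  · have : 0 ≤ γ * (‖(0 : X)‖ / ‖x‖) ^ q := by positivity
    simp only [add_zero, sub_zero]
    nlinarith
  have hy' : 0 < ‖y‖ := norm_pos_iff.2 hy
  set u := ‖y‖ / ‖x‖ with hu
  have hu0 : 0 < u := by positivity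
  have hbdd : BddAbove {r : ℝ | ∃ x y : X, ‖x‖ = 1 ∧ ‖y‖ = 1 ∧
      r = (‖x + u • y‖ + ‖x - u • y‖) / 2 - 1} := by
    refine ⟨u, ?_⟩
    rintro r ⟨a, b, ha, hb, rfl⟩
    have h1 := norm_add_le a (u • b)
    have h2 := norm_sub_le a (u • b)
    rw [norm_smul, Real.norm_of_nonneg hu0.le, ha, hb] at h1 h2
    linarith
  have key := le_csSup hbdd ⟨‖x‖⁻¹ • x, ‖y‖⁻¹ • y,
    norm_smul_inv_norm (𝕜 := ℝ) hx, norm_smul_inv_norm (𝕜 := ℝ) hy, rfl⟩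
  have h2 := key.trans (h u hu0)
  have e : u • ‖y‖⁻¹ • y = ‖x‖⁻¹ • y := by
    rw [smul_smul, hu]; congr 1; field_simp
  rw [e, ← smul_add, ← smul_sub, norm_smul, norm_smul, norm_inv, norm_norm] at h2
  have h3 : (‖x‖⁻¹ * ‖x + y‖ + ‖x‖⁻¹ * ‖x - y‖) ≤ 2 * (1 + γ * u ^ q) := by linarith
  calc ‖x + y‖ + ‖x - y‖ = ‖x‖ * (‖x‖⁻¹ * ‖x + y‖ + ‖x‖⁻¹ * ‖x - y‖) := by field_simp
    _ ≤ ‖x‖ * (2 * (1 + γ * u ^ q)) := by gcongr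
    _ = _ := by ring

/-- For `x` bounded away from `0`, the smoothness inequality holds with a constant independent of `x`. -/
theorem smooth_ineq_of_le {X : Type*} [NormedAddCommGroup X] [NormedSpace ℝ X] {q γ α : ℝ}
    (hq : 1 < q) (hγ : 0 ≤ γ) (hα : 0 < α)
    (h : ∀ u > 0, modS X u ≤ γ * u ^ q) (x y : X) (hx : α ≤ ‖x‖) :
    ‖x + y‖ + ‖x - y‖ ≤ 2 * ‖x‖ + 2 * γ * α ^ (1 - q) * ‖y‖ ^ q := by
  have hx' : 0 < ‖x‖ := hα.trans_le hx
  refine (smooth_ineq hγ h x y (norm_pos_iff.1 hx')).trans ?_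
  rw [Real.div_rpow (norm_nonneg _) (norm_nonneg _)]
  have e : 2 * ‖x‖ * (1 + γ * (‖y‖ ^ q / ‖x‖ ^ q))
      = 2 * ‖x‖ + 2 * γ * ‖x‖ ^ (1 - q) * ‖y‖ ^ q := by
    rw [Real.rpow_sub hx', Real.rpow_one]; field_simp
  rw [e]
  have : ‖x‖ ^ (1 - q) ≤ α ^ (1 - q) :=
    Real.rpow_le_rpow_of_nonpos hα hx (by linarith)
  gcongr

/-! ### Auxiliary facts for the convergence argument -/

theorem exists_small (K : ℝ) (hK : 0 ≤ K) {ε s : ℝ} (hε : 0 < ε) (hs : 0 < s) :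
    ∃ c : ℝ, 0 < c ∧ c ≤ 1 ∧ K * c ^ s ≤ ε := by
  have hpos : 0 < ε / (K + 1) := by positivity
  refine ⟨min 1 ((ε / (K + 1)) ^ (1 / s)), by positivity, min_le_left _ _, ?_⟩
  have h1 : (min 1 ((ε / (K + 1)) ^ (1 / s))) ^ s ≤ ε / (K + 1) := by
    calc _ ≤ ((ε / (K + 1)) ^ (1 / s)) ^ s :=
          Real.rpow_le_rpow (by positivity) (min_le_right _ _) hs.le
      _ = _ := by rw [← Real.rpow_mul hpos.le, one_div_mul_cancel hs.ne', Real.rpow_one]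
  calc _ ≤ K * (ε / (K + 1)) := by gcongr
    _ ≤ ε := by rw [← mul_div_assoc, div_le_iff₀ (by positivity)]; nlinarith

/-- A functional bounded by `s` on a symmetric set is bounded at a point of its span by a multiple of
`s`, the factor depending on the point only. -/
theorem span_bound {X : Type*} [NormedAddCommGroup X] [NormedSpace ℝ X] {D : Set X}
    (hD : ∀ g ∈ D, -g ∈ D) {g : X} (hg : g ∈ Submodule.span ℝ D) :
    ∃ A : ℝ, 0 ≤ A ∧ ∀ (F : X →L[ℝ] ℝ) (s : ℝ), (∀ d ∈ D, F d ≤ s) → |F g| ≤ A * s := by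
  induction hg using Submodule.span_induction with
  | mem x hx =>
    refine ⟨1, zero_le_one, fun F s h => ?_⟩
    have := h _ (hD x hx)
    rw [map_neg] at this
    rw [one_mul, abs_le]
    exact ⟨by linarith, h x hx⟩
  | zero => exact ⟨0, le_rfl, by simp⟩
  | add x y _ _ hx hy =>
    obtain ⟨A, hA, h1⟩ := hx
    obtain ⟨B, hB, h2⟩ := hy
    refine ⟨A + B, by positivity, fun F s h => ?_⟩
    rw [map_add, add_mul]
    exact (abs_add_le _ _).trans (add_le_add (h1 F s h) (h2 F s h))
  | smul a x _ hx =>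
    obtain ⟨A, hA, h1⟩ := hx
    refine ⟨|a| * A, by positivity, fun F s h => ?_⟩
    rw [map_smul, smul_eq_mul, abs_mul, mul_assoc]
    exact mul_le_mul_of_nonneg_left (h1 F s h) (abs_nonneg a)

/-- Terms eventually dominated by the decrements of a nonnegative sequence plus a summable sequence
are summable. -/
theorem summable_of_telescoping {a E b : ℕ → ℝ} (n₀ : ℕ) (ha : ∀ n, 0 ≤ a n) (hE : ∀ n, 0 ≤ E n)
    (hb0 : ∀ n, 0 ≤ b n) (hb : Summable b)
    (h : ∀ n ≥ n₀, a n ≤ E n - E (n + 1) + b n) : Summable a := by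
  rw [← summable_nat_add_iff n₀]
  refine summable_of_sum_range_le (c := E n₀ + ∑' n, b (n + n₀)) (fun n => ha _) fun N => ?_
  have hb' := (summable_nat_add_iff n₀).2 hb
  calc ∑ i ∈ Finset.range N, a (i + n₀)
      ≤ ∑ i ∈ Finset.range N, (E (i + n₀) - E (i + 1 + n₀) + b (i + n₀)) := by
        refine Finset.sum_le_sum fun i _ => ?_
        have := h (i + n₀) (by omega)
        rwa [show i + n₀ + 1 = i + 1 + n₀ by ring] at this
    _ = E n₀ - E (N + n₀) + ∑ i ∈ Finset.range N, b (i + n₀) := by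
        rw [Finset.sum_add_distrib, Finset.sum_range_sub' (fun i => E (i + n₀)), zero_add]
    _ ≤ _ := by
        have := hb'.sum_le_tsum (Finset.range N) (fun i _ => hb0 _)
        linarith [hE (N + n₀)]

/-! ### Convergence when the weakness series diverges -/

theorem converges {X : Type*} [NormedAddCommGroup X] [NormedSpace ℝ X]
    {q p γ : ℝ} (hq1 : 1 < q) (hpq : p = q / (q - 1)) (hγ : 0 < γ)
    (hX : ∀ u > 0, modS X u ≤ γ * u ^ q)
    {t t' δ δ' η η' : ℕ → ℝ}
    (ht0 : ∀ n, 0 ≤ t n) (ht1 : ∀ n, t n ≤ 1) (ht' : ∀ n, 0 ≤ t' n)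
    (hδ : ∀ n, 0 ≤ δ n) (hδ' : ∀ n, 0 ≤ δ' n)
    (hη : ∀ n, 0 ≤ η n) (hη' : ∀ n, 0 ≤ η' n)
    (ht'sum : Summable (fun n => t' (n + 1)))
    (hδsum : Summable δ) (hδ'sum : Summable δ')
    (hηsum : Summable η) (hη'sum : Summable η')
    (htsum : ¬ Summable (fun n => t (n + 1) ^ p))
    {D : Set X} (hD : IsDictionary D) {f : X} {F : ℕ → X →L[ℝ] ℝ} {φ G : ℕ → X}
    (hG : IsGAWCGA D f t t' δ δ' η η' F φ G) :
    Tendsto (fun n => ‖f - G n‖) atTop (𝓝 0) := by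
  obtain ⟨-, hF, hφ, hGn⟩ := hG
  obtain ⟨hD1, hDs, hDd⟩ := hD
  set Φ : ℕ → Submodule ℝ X := fun n => Submodule.span ℝ (φ '' Set.Icc 1 n) with hΦ
  set E : ℕ → ℝ := fun n => Metric.infDist f (Φ n : Set X) with hE
  have hΦmono : ∀ n, Φ n ≤ Φ (n + 1) := fun n =>
    Submodule.span_mono (Set.image_mono (Set.Icc_subset_Icc_right (Nat.le_succ n)))
  have hE0 : ∀ n, 0 ≤ E n := fun n => Metric.infDist_nonneg
  have hEle : ∀ n, ∀ v ∈ Φ n, E n ≤ ‖f - v‖ := fun n v hv => by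
    rw [← dist_eq_norm]; exact Metric.infDist_le_dist_of_mem hv
  have hEanti : Antitone E := antitone_nat_of_succ_le fun n =>
    Metric.infDist_le_infDist_of_subset (hΦmono n) ⟨0, (Φ n).zero_mem⟩
  obtain ⟨α, hα⟩ : ∃ α, Tendsto E atTop (𝓝 α) :=
    ⟨_, tendsto_atTop_ciInf hEanti ⟨0, by rintro _ ⟨n, rfl⟩; exact hE0 n⟩⟩
  have hαE : ∀ n, α ≤ E n := fun n => hEanti.le_of_tendsto hα n
  have hα0 : 0 ≤ α := ge_of_tendsto' hα hE0
  have hNα : Tendsto (fun n => ‖f - G n‖) atTop (𝓝 α) := by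
    have h1 : Tendsto (fun n => (1 + η n) * E n + η' n) atTop (𝓝 α) := by
      simpa using ((hηsum.tendsto_atTop_zero.const_add 1).mul hα).add hη'sum.tendsto_atTop_zero
    refine tendsto_of_tendsto_of_tendsto_of_le_of_le' hα h1 ?_ ?_
    · filter_upwards [eventually_ge_atTop 1] with n hn using hEle n _ (hGn n hn).1
    · filter_upwards [eventually_ge_atTop 1] with n hn using (hGn n hn).2
  rcases hα0.eq_or_lt with h0 | hαpos
  · rwa [h0]
  exfalso
  apply htsum
  obtain ⟨M, hM⟩ : ∃ M, ∀ n, ‖f - G n‖ ≤ M := by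
    obtain ⟨M, hM⟩ := hNα.bddAbove_range
    exact ⟨M, fun n => hM ⟨n, rfl⟩⟩
  have hM0 : 0 ≤ M := (norm_nonneg _).trans (hM 0)
  set B := 2 * γ * α ^ (1 - q) with hB
  have hB0 : 0 ≤ B := by positivity
  -- Smoothness at `f_n` in the direction `y`, with `‖f_n + y‖` bounded below by `F_n(f_n + y)`.
  have hsm : ∀ n ≥ 1, ∀ y : X,
      (1 - δ n) * ‖f - G n‖ - δ' n + F n y + ‖f - G n - y‖ ≤ 2 * ‖f - G n‖ + B * ‖y‖ ^ q := by
    intro n hn y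
    have h1 := smooth_ineq_of_le hq1 hγ.le hαpos hX (f - G n) y
      ((hαE n).trans (hEle n _ (hGn n hn).1))
    have h2 : F n (f - G n + y) ≤ ‖f - G n + y‖ :=
      (le_abs_self _).trans (((F n).le_opNorm _).trans
        (mul_le_of_le_one_left (norm_nonneg _) (hF n).1))
    rw [map_add] at h2
    linarith [(hF n).2]
  have hδM : ∀ n, δ n * ‖f - G n‖ ≤ δ n * M := fun n => mul_le_mul_of_nonneg_left (hM n) (hδ n)
  set L := ‖f‖ + M with hL
  have hGL : ∀ n, ‖G n‖ ≤ L := fun n => by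
    have := norm_sub_le f (f - G n)
    rw [sub_sub_cancel] at this
    linarith [hM n]
  have hL0 : 0 ≤ L := by positivity
  have hq' : 0 < q - 1 := by linarith
  -- Approximate orthogonality of `F_n` and `G_n`; only this one-sided bound is needed.
  have horth : ∀ᶠ n in atTop, -(α / 4) ≤ F n (G n) := by
    obtain ⟨c, hc0, -, hc⟩ := exists_small (B * L ^ q) (by positivity)
      (show 0 < α / 8 by positivity) hq'
    have hlim : Tendsto (fun n => ‖f - G n‖ - E n + δ n * M + δ' n) atTop (𝓝 0) := by
      simpa using ((hNα.sub hα).add (hδsum.tendsto_atTop_zero.mul_const M)).add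
        hδ'sum.tendsto_atTop_zero
    filter_upwards [eventually_ge_atTop 1,
      hlim.eventually_le_const (show 0 < c * (α / 8) by positivity)] with n hn hn2
    have h1 := hsm n hn (c • -G n)
    -- `f_n - y` with `y = -c G_n` is `f - (1 - c) G_n`, and `(1 - c) G_n` lies in `Φ_n`.
    have h2 : E n ≤ ‖f - G n - c • -G n‖ := by
      have := hEle n ((1 - c) • G n) ((Φ n).smul_mem _ (hGn n hn).1)
      convert this using 2
      module
    rw [map_smul, map_neg, smul_eq_mul, norm_smul, norm_neg, Real.norm_of_nonneg hc0.le,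
      Real.mul_rpow hc0.le (norm_nonneg _)] at h1
    have h3 : B * (c ^ q * ‖G n‖ ^ q) ≤ c * (α / 8) := by
      calc B * (c ^ q * ‖G n‖ ^ q) ≤ B * (c ^ q * L ^ q) := by
            have := hGL n
            gcongr
        _ = c * (B * L ^ q * c ^ (q - 1)) := by
            rw [Real.rpow_sub hc0, Real.rpow_one]; field_simp
        _ ≤ _ := by gcongr
    have h4 : c * -F n (G n) ≤ c * (α / 4) := by
      linarith [hδM n]
    have := le_of_mul_le_mul_left h4 hc0
    linarith
  obtain ⟨g, hgD, hgf⟩ : ∃ g ∈ Submodule.span ℝ D, ‖f - g‖ ≤ α / 4 := by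
    obtain ⟨g, hg, hd⟩ := hDd.exists_dist_lt f (show 0 < α / 4 by positivity)
    exact ⟨g, hg, by rw [← dist_eq_norm]; exact hd.le⟩
  obtain ⟨A, hA0, hA⟩ := span_bound hDs hgD
  -- `A + 1` instead of `A` keeps the denominator positive.
  set θ := α / (4 * (A + 1)) with hθ
  have hθ0 : 0 < θ := by positivity
  have hsup : ∀ᶠ n in atTop, θ ≤ sSup ((fun g => F n g) '' D) := by
    have hlim : Tendsto (fun n => δ n * M + δ' n) atTop (𝓝 0) := by
      simpa using (hδsum.tendsto_atTop_zero.mul_const M).add hδ'sum.tendsto_atTop_zero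
    filter_upwards [eventually_ge_atTop 1, horth,
      hlim.eventually_le_const (show 0 < α / 4 by positivity)] with n hn h1 h2
    set S := sSup ((fun g => F n g) '' D) with hS
    have hbd : BddAbove ((fun g => F n g) '' D) := by
      refine ⟨1, ?_⟩
      rintro _ ⟨d, hd, rfl⟩
      have := (F n).le_opNorm d
      rw [hD1 d hd, mul_one] at this
      exact (le_abs_self _).trans (this.trans (hF n).1)
    have h3 := hA (F n) S (fun d hd => le_csSup hbd ⟨d, hd, rfl⟩)
    have h4 : F n (f - g) ≤ α / 4 :=
      (le_abs_self _).trans (((F n).le_opNorm _).trans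
        ((mul_le_of_le_one_left (norm_nonneg _) (hF n).1).trans hgf))
    have h5 := (hF n).2
    rw [map_sub] at h4 h5
    have h6 := (hαE n).trans (hEle n _ (hGn n hn).1)
    have h7 : α / 4 ≤ A * S := by
      linarith [le_abs_self (F n g), hδM n]
    have hS0 : 0 ≤ S := by
      by_contra hneg
      have := mul_nonpos_of_nonneg_of_nonpos hA0 (not_le.1 hneg).le
      linarith
    rw [hθ, div_le_iff₀ (by positivity)]
    linarith
  obtain ⟨c, hc0, hc1, hc⟩ := exists_small B hB0 (show 0 < θ / 2 by positivity) hq'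
  obtain ⟨n₀, hn₀⟩ := eventually_atTop.1 (hsup.and (eventually_ge_atTop 1))
  have hsum : Summable fun n => (c * θ / 2) * t (n + 1) ^ p := by
    refine summable_of_telescoping (E := E)
      (b := fun n => η n * M + η' n + δ n * M + δ' n + t' (n + 1)) n₀
      (fun n => ?_) hE0 (fun n => ?_) ?_ ?_
    · have := ht0 (n + 1); positivity
    · have := hη n; have := hη' n; have := hδ n; have := hδ' n; have := ht' (n + 1); positivity
    · exact ((((hηsum.mul_right M).add hη'sum).add (hδsum.mul_right M)).add hδ'sum).add ht'sum
    intro n hn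
    obtain ⟨hS, hn1⟩ := hn₀ n hn
    set τ := t (n + 1) with hτ
    have hτ0 : 0 ≤ τ := ht0 _
    -- This power of `τ` makes the linear gain `r * τ` and the smoothness loss `r ^ q` both equal to
    -- `τ ^ p`, so that the small constant `c` decides between them.
    set r := τ ^ (1 / (q - 1)) with hr
    have hr0 : 0 ≤ r := by positivity
    have hr1 : r ≤ 1 := Real.rpow_le_one hτ0 (ht1 _) (by positivity)
    have hp0 : 0 < p := by rw [hpq]; exact div_pos (by linarith) hq'
    have hrq : r ^ q = τ ^ p := by
      rw [hr, ← Real.rpow_mul hτ0, hpq]; congr 1; ring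
    have hrτ : r * τ = τ ^ p := by
      rcases hτ0.eq_or_lt with h | h
      · rw [← h, mul_zero, Real.zero_rpow hp0.ne']
      · rw [hr, ← Real.rpow_add_one h.ne', hpq]; congr 1; field_simp; ring
    have h1 := hsm n hn1 ((c * r) • φ (n + 1))
    have hφΦ : φ (n + 1) ∈ Φ (n + 1) :=
      Submodule.subset_span ⟨n + 1, ⟨by omega, le_rfl⟩, rfl⟩
    have h2 : E (n + 1) ≤ ‖f - G n - (c * r) • φ (n + 1)‖ := by
      rw [sub_sub]
      exact hEle _ _ ((Φ _).add_mem (hΦmono n (hGn n hn1).1) ((Φ _).smul_mem _ hφΦ))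
    have hcr : 0 ≤ c * r := by positivity
    rw [map_smul, smul_eq_mul, norm_smul, Real.norm_of_nonneg hcr, hD1 _ (hφ n).1, mul_one,
      Real.mul_rpow hc0.le hr0, hrq] at h1
    have h3 : B * (c ^ q * τ ^ p) ≤ c * θ / 2 * τ ^ p := by
      calc B * (c ^ q * τ ^ p) = c * (B * c ^ (q - 1)) * τ ^ p := by
            rw [Real.rpow_sub hc0, Real.rpow_one]; field_simp
        _ ≤ c * (θ / 2) * τ ^ p := by gcongr
        _ = _ := by ring
    have h4 : c * θ * τ ^ p - t' (n + 1) ≤ c * r * F n (φ (n + 1)) := by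
      have h5 : τ * θ - t' (n + 1) ≤ F n (φ (n + 1)) := by
        have := mul_le_mul_of_nonneg_left hS hτ0
        linarith [(hφ n).2]
      have h6 := mul_le_mul_of_nonneg_left h5 hcr
      have h7 : c * r * t' (n + 1) ≤ t' (n + 1) :=
        mul_le_of_le_one_left (ht' _) (mul_le_one₀ hc1 hr0 hr1)
      have h8 : c * r * (τ * θ) = c * θ * τ ^ p := by rw [← hrτ]; ring
      linarith
    have h5 := (hGn n hn1).2
    have h6 : η n * E n ≤ η n * M :=
      mul_le_mul_of_nonneg_left ((hEle n _ (hGn n hn1).1).trans (hM n)) (hη n)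
    change ‖f - G n‖ ≤ (1 + η n) * E n + η' n at h5
    linarith [hδM n]
  exact (summable_mul_left_iff (by positivity)).1 hsum

/-! ### Smoothness of the sequence spaces -/

/-- The scalar inequality follows from concavity and subadditivity of `s ↦ s ^ (q / 2)`, applied to
squares. -/
theorem clarkson_real {q : ℝ} (hq1 : 1 < q) (hq2 : q ≤ 2) (a b : ℝ) :
    |a + b| ^ q + |a - b| ^ q ≤ 2 * (|a| ^ q + |b| ^ q) := by
  have hs0 : 0 ≤ q / 2 := by linarith
  have hs1 : q / 2 ≤ 1 := by linarith
  have e : ∀ x : ℝ, |x| ^ q = (x ^ 2) ^ (q / 2) := fun x => by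
    rw [← sq_abs, ← Real.rpow_natCast, ← Real.rpow_mul (abs_nonneg x)]
    congr 1; push_cast; ring
  have h1 := (Real.concaveOn_rpow hs0 hs1).2 (Set.mem_Ici.2 (sq_nonneg (a + b)))
    (Set.mem_Ici.2 (sq_nonneg (a - b))) (show (0 : ℝ) ≤ 1 / 2 by norm_num)
    (show (0 : ℝ) ≤ 1 / 2 by norm_num) (by norm_num)
  simp only [smul_eq_mul] at h1
  have h2 := Real.rpow_add_le_add_rpow (sq_nonneg a) (sq_nonneg b) hs0 hs1
  rw [show 1 / 2 * (a + b) ^ 2 + 1 / 2 * (a - b) ^ 2 = a ^ 2 + b ^ 2 by ring] at h1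
  rw [e, e, e, e]
  linarith

theorem clarkson_lp {ι : Type*} {q : ℝ} (hq1 : 1 < q) (hq2 : q ≤ 2)
    (x y : lp (fun _ : ι => ℝ) (ENNReal.ofReal q)) :
    ‖x + y‖ ^ q + ‖x - y‖ ^ q ≤ 2 * (‖x‖ ^ q + ‖y‖ ^ q) := by
  have hr : (ENNReal.ofReal q).toReal = q := ENNReal.toReal_ofReal (by linarith)
  have hS : ∀ z : lp (fun _ : ι => ℝ) (ENNReal.ofReal q),
      HasSum (fun i => |z i| ^ q) (‖z‖ ^ q) := fun z => by
    have := lp.hasSum_norm (by rw [hr]; linarith) z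
    rwa [hr] at this
  exact hasSum_le (fun i => clarkson_real hq1 hq2 (x i) (y i)) ((hS (x + y)).add (hS (x - y)))
    (((hS x).add (hS y)).mul_left 2)

theorem modS_lp_le {ι : Type*} {q : ℝ} (hq1 : 1 < q) (hq2 : q ≤ 2)
    [Fact (1 ≤ ENNReal.ofReal q)] {u : ℝ} (hu : 0 < u) :
    modS (lp (fun _ : ι => ℝ) (ENNReal.ofReal q)) u ≤ u ^ q := by
  refine Real.sSup_le ?_ (by positivity)
  rintro _ ⟨x, y, hx, hy, rfl⟩
  have h1 := clarkson_lp hq1 hq2 x (u • y)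
  rw [norm_smul, Real.norm_of_nonneg hu.le, hx, hy, mul_one, Real.one_rpow] at h1
  have h2 := (convexOn_rpow hq1.le).2 (Set.mem_Ici.2 (norm_nonneg (x + u • y)))
    (Set.mem_Ici.2 (norm_nonneg (x - u • y))) (show (0 : ℝ) ≤ 1 / 2 by norm_num)
    (show (0 : ℝ) ≤ 1 / 2 by norm_num) (by norm_num)
  simp only [smul_eq_mul] at h2
  have hu' : 0 ≤ u ^ q := by positivity
  have h3 : 1 + u ^ q ≤ (1 + u ^ q) ^ q :=
    Real.self_le_rpow_of_one_le (by linarith) hq1.le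
  have h4 : 1 / 2 * ‖x + u • y‖ + 1 / 2 * ‖x - u • y‖ ≤ 1 + u ^ q :=
    (Real.rpow_le_rpow_iff (by positivity) (by positivity) (by linarith)).1
      (by linarith : _ ≤ (1 + u ^ q) ^ q)
  linarith

/-! ### A divergent realization -/

/-- The norming functional of a nonzero nonnegative sequence `c` in `ℓ_q`: its values on the unit
vectors are proportional to `c i ^ (q - 1)`. The norm bound is Hölder's inequality. -/
theorem exists_norming_s5 {ι : Type*} [DecidableEq ι] {q : ℝ} (hq1 : 1 < q)
    [Fact (1 ≤ ENNReal.ofReal q)] (c : lp (fun _ : ι => ℝ) (ENNReal.ofReal q))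
    (hc0 : ∀ i, 0 ≤ c i) (hc : c ≠ 0) :
    ∃ (K : ℝ) (F : lp (fun _ : ι => ℝ) (ENNReal.ofReal q) →L[ℝ] ℝ), 0 ≤ K ∧ ‖F‖ ≤ 1 ∧
      F c = ‖c‖ ∧ ∀ i, F (lp.single _ i 1) = K * c i ^ (q - 1) := by
  have hr : (ENNReal.ofReal q).toReal = q := ENNReal.toReal_ofReal (by linarith)
  have hcpos : 0 < ‖c‖ := norm_pos_iff.2 hc
  have hpq : q.HolderConjugate q.conjExponent := Real.HolderConjugate.conjExponent hq1
  set p := q.conjExponent with hp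
  have hr' : (ENNReal.ofReal p).toReal = p := ENNReal.toReal_ofReal hpq.symm.nonneg
  have hS : HasSum (fun i => c i ^ q) (‖c‖ ^ q) := by
    have := lp.hasSum_norm (by rw [hr]; linarith) c
    simpa only [hr, Real.norm_of_nonneg (hc0 _)] using this
  set K := (‖c‖ ^ (q - 1))⁻¹ with hK
  have hK0 : 0 < K := by positivity
  have hqp : (q - 1) * p = q := hpq.sub_one_mul_conj
  have hKp : K ^ p = (‖c‖ ^ q)⁻¹ := by
    rw [hK, Real.inv_rpow (by positivity), ← Real.rpow_mul hcpos.le, hqp]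
  have hw : HasSum (fun i => ‖K * c i ^ (q - 1)‖ ^ p) 1 := by
    have h := hS.mul_left (K ^ p)
    rw [hKp, inv_mul_cancel₀ (by positivity), ← hKp] at h
    suffices hfun : (fun i => ‖K * c i ^ (q - 1)‖ ^ p) = fun i => K ^ p * c i ^ q by rwa [hfun]
    funext i
    have := hc0 i
    rw [Real.norm_of_nonneg (by positivity), Real.mul_rpow hK0.le (by positivity),
      ← Real.rpow_mul this, hqp]
  -- The sequence representing the functional, an element of norm `1` of the dual `ℓ_p`.
  let w : lp (fun _ : ι => ℝ) (ENNReal.ofReal p) :=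
    ⟨fun i => K * c i ^ (q - 1), memℓp_gen (by simp only [hr']; exact hw.summable)⟩
  have hwn : ‖w‖ ≤ 1 := by
    refine lp.norm_le_of_tsum_le (by rw [hr']; exact hpq.symm.pos) zero_le_one ?_
    rw [hr', Real.one_rpow]
    exact hw.tsum_eq.le
  have hH := fun x => lp.tsum_mul_le_mul_norm (p := ENNReal.ofReal p) (q := ENNReal.ofReal q)
    (by rw [hr, hr']; exact hpq.symm) w x
  have hsum : ∀ x : lp (fun _ : ι => ℝ) (ENNReal.ofReal q), Summable fun i => w i * x i := fun x =>
    Summable.of_norm (by simpa only [norm_mul] using (hH x).1)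
  let F₀ : lp (fun _ : ι => ℝ) (ENNReal.ofReal q) →ₗ[ℝ] ℝ :=
    { toFun := fun x => ∑' i, w i * x i
      map_add' := fun x y => by
        rw [← (hsum x).tsum_add (hsum y)]
        refine tsum_congr fun i => ?_
        rw [lp.coeFn_add, Pi.add_apply, mul_add]
      map_smul' := fun a x => by
        rw [RingHom.id_apply, smul_eq_mul, ← tsum_mul_left]
        refine tsum_congr fun i => ?_
        rw [lp.coeFn_smul, Pi.smul_apply, smul_eq_mul]; ring }
  have hb : ∀ x, ‖F₀ x‖ ≤ 1 * ‖x‖ := fun x => by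
    calc ‖∑' i, w i * x i‖ ≤ ∑' i, ‖w i * x i‖ :=
          norm_tsum_le_tsum_norm (by simpa only [norm_mul] using (hH x).1)
      _ = ∑' i, ‖w i‖ * ‖x i‖ := by simp only [norm_mul]
      _ ≤ ‖w‖ * ‖x‖ := (hH x).2
      _ ≤ _ := by gcongr
  refine ⟨K, F₀.mkContinuous 1 hb, hK0.le, F₀.mkContinuous_norm_le zero_le_one hb, ?_, fun i => ?_⟩
  · have h : (fun i => w i * c i) = fun i => K * c i ^ q := by
      funext i
      change K * c i ^ (q - 1) * c i = _
      rw [mul_assoc, ← Real.rpow_add_one' (hc0 i) (by linarith), sub_add_cancel]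
    change ∑' i, w i * c i = _
    rw [h, (hS.mul_left K).tsum_eq, hK, Real.rpow_sub hcpos, Real.rpow_one]
    field_simp
  · change ∑' j, w j * (lp.single _ i (1 : ℝ) : lp (fun _ : ι => ℝ) (ENNReal.ofReal q)) j = _
    rw [tsum_eq_single i fun j hj => by rw [lp.single_apply_ne _ _ _ hj, mul_zero],
      lp.single_apply_self, mul_one]

/-- The divergent realization in `ℓ_q(ι)`. The countable index type `ι` is arbitrary so that the space
can be placed in any universe. -/
theorem exists_divergent {ι : Type*} (ν : ι ≃ ℕ) {q p : ℝ} (hq1 : 1 < q) (hpq : p = q / (q - 1))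
    [Fact (1 ≤ ENNReal.ofReal q)]
    {t t' δ δ' η η' : ℕ → ℝ}
    (ht0 : ∀ n, 0 ≤ t n) (ht1 : ∀ n, t n ≤ 1) (ht' : ∀ n, 0 ≤ t' n)
    (hδ : ∀ n, 0 ≤ δ n) (hδ' : ∀ n, 0 ≤ δ' n)
    (hη : ∀ n, 0 ≤ η n) (hη' : ∀ n, 0 ≤ η' n)
    (htsum : Summable (fun n => t (n + 1) ^ p)) :
    ∃ (D : Set (lp (fun _ : ι => ℝ) (ENNReal.ofReal q)))
      (f : lp (fun _ : ι => ℝ) (ENNReal.ofReal q))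
      (F : ℕ → lp (fun _ : ι => ℝ) (ENNReal.ofReal q) →L[ℝ] ℝ)
      (φ G : ℕ → lp (fun _ : ι => ℝ) (ENNReal.ofReal q)),
        IsDictionary D ∧ IsGAWCGA D f t t' δ δ' η η' F φ G ∧
        ¬ Tendsto (fun n => ‖f - G n‖) atTop (𝓝 0) := by
  classical
  have hr : (ENNReal.ofReal q).toReal = q := ENNReal.toReal_ofReal (by linarith)
  have hQ0 : 0 < ENNReal.ofReal q := ENNReal.ofReal_pos.2 (by linarith)
  have hq' : 0 < q - 1 := by linarith
  set e : ℕ → lp (fun _ : ι => ℝ) (ENNReal.ofReal q) := fun n => lp.single _ (ν.symm n) 1 with he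
  have he_same : ∀ n, e n (ν.symm n) = 1 := fun n => lp.single_apply_self _ _ _
  have he_ne : ∀ n i, ν i ≠ n → e n i = 0 := fun n i h =>
    lp.single_apply_ne _ _ _ (fun h' => h (by rw [h', ν.apply_symm_apply]))
  -- The coordinates of `f`; every `t n ≤ 1`, so the coordinate at `0` is the largest.
  set a : ℕ → ℝ := fun n => if n = 0 then 1 else t n ^ (1 / (q - 1)) with ha
  have ha0 : ∀ n, 0 ≤ a n := fun n => by
    have := ht0 n
    simp only [ha]; split_ifs <;> positivity
  have ha1 : ∀ n, a n ≤ 1 := fun n => by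
    simp only [ha]; split_ifs
    · exact le_rfl
    · exact Real.rpow_le_one (ht0 n) (ht1 n) (by positivity)
  have hat : ∀ n, a (n + 1) ^ (q - 1) = t (n + 1) := fun n => by
    simp only [ha, if_neg (Nat.succ_ne_zero n)]
    rw [← Real.rpow_mul (ht0 _), one_div_mul_cancel hq'.ne', Real.rpow_one]
  have hasum : Summable fun n => a n ^ q := by
    rw [← summable_nat_add_iff 1]
    refine htsum.congr fun n => ?_
    simp only [ha, if_neg (Nat.succ_ne_zero n)]
    rw [← Real.rpow_mul (ht0 _), hpq]; congr 1; ring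
  let f : lp (fun _ : ι => ℝ) (ENNReal.ofReal q) := ⟨fun i => a (ν i), memℓp_gen (by
    simp only [hr, Real.norm_of_nonneg (ha0 _)]
    exact (Equiv.summable_iff ν (f := fun n => a n ^ q)).2 hasum)⟩
  have hf : ∀ i, f i = a (ν i) := fun i => rfl
  set G : ℕ → lp (fun _ : ι => ℝ) (ENNReal.ofReal q) :=
    fun n => ∑ k ∈ Finset.Icc 1 n, a k • e k with hGdef
  have hG : ∀ n i, G n i = if ν i ∈ Finset.Icc 1 n then a (ν i) else 0 := fun n i => by
    simp only [hGdef]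
    rw [lp.coeFn_sum, Finset.sum_apply]
    simp only [lp.coeFn_smul, Pi.smul_apply, smul_eq_mul]
    split_ifs with h
    · rw [Finset.sum_eq_single_of_mem (ν i) h]
      · have := he_same (ν i)
        rw [ν.symm_apply_apply] at this
        rw [this, mul_one]
      · intro k _ hk
        rw [he_ne k i (Ne.symm hk), mul_zero]
    · refine Finset.sum_eq_zero fun k hk => ?_
      rw [he_ne k i (fun h' => h (h' ▸ hk)), mul_zero]
  have hfG : ∀ n i, (f - G n) i = if ν i ∈ Finset.Icc 1 n then 0 else a (ν i) := fun n i => by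
    rw [lp.coeFn_sub, Pi.sub_apply, hf, hG]
    split_ifs <;> simp
  have hfG0 : ∀ n i, 0 ≤ (f - G n) i := fun n i => by
    rw [hfG]; split_ifs; exacts [le_rfl, ha0 _]
  have hfG1 : ∀ n i, (f - G n) i ≤ 1 := fun n i => by
    rw [hfG]; split_ifs; exacts [zero_le_one, ha1 _]
  have hnorm : ∀ n, 1 ≤ ‖f - G n‖ := fun n => by
    have h := lp.norm_apply_le_norm hQ0.ne' (f - G n) (ν.symm 0)
    rw [hfG, ν.apply_symm_apply] at h
    simpa [ha] using h
  have hne : ∀ n, f - G n ≠ 0 := fun n => norm_pos_iff.1 (zero_lt_one.trans_le (hnorm n))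
  choose K F hK0 hF1 hFc hFe using fun n => exists_norming_s5 hq1 (f - G n) (hfG0 n) (hne n)
  set D : Set (lp (fun _ : ι => ℝ) (ENNReal.ofReal q)) :=
    Set.range e ∪ Set.range (fun n => -e n) with hD
  refine ⟨D, f, F, e, G, ⟨?_, ?_, ?_⟩, ⟨by simp [hGdef], fun n => ⟨hF1 n, ?_⟩,
    fun n => ⟨Or.inl ⟨n + 1, rfl⟩, ?_⟩, fun n _ => ⟨?_, ?_⟩⟩, ?_⟩
  · rintro _ (⟨n, rfl⟩ | ⟨n, rfl⟩)
    · simp only [he, lp.norm_single hQ0, norm_one]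
    · simp only [he, norm_neg, lp.norm_single hQ0, norm_one]
  · rintro _ (⟨n, rfl⟩ | ⟨n, rfl⟩)
    · exact Or.inr ⟨n, rfl⟩
    · exact Or.inl ⟨n, (neg_neg _).symm⟩
  · intro x
    refine mem_closure_of_tendsto (lp.hasSum_single ENNReal.ofReal_ne_top x)
      (Eventually.of_forall fun s => Submodule.sum_mem _ fun i _ => ?_)
    have h : lp.single (ENNReal.ofReal q) i (x i) = x i • e (ν i) := by
      simp only [he, ν.symm_apply_apply]
      rw [← lp.single_smul, smul_eq_mul, mul_one]
    rw [h]
    exact Submodule.smul_mem _ _ (Submodule.subset_span (Or.inl ⟨_, rfl⟩))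
  · rw [hFc]
    have := mul_nonneg (hδ n) (norm_nonneg (f - G n))
    linarith [hδ' n]
  · have hle : ∀ k, 0 ≤ F n (e k) ∧ F n (e k) ≤ K n := fun k => by
      simp only [he]
      rw [hFe]
      have h0 := Real.rpow_nonneg (hfG0 n (ν.symm k)) (q - 1)
      have h1 := Real.rpow_le_one (hfG0 n (ν.symm k)) (hfG1 n (ν.symm k)) hq'.le
      exact ⟨mul_nonneg (hK0 n) h0, mul_le_of_le_one_right (hK0 n) h1⟩
    have hsup : sSup ((fun g => F n g) '' D) ≤ K n := by
      refine csSup_le ⟨_, e 0, Or.inl ⟨0, rfl⟩, rfl⟩ ?_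
      rintro _ ⟨_, ⟨k, rfl⟩ | ⟨k, rfl⟩, rfl⟩
      · exact (hle k).2
      · simp only [map_neg]
        linarith [(hle k).1, hK0 n]
    have hval : F n (e (n + 1)) = K n * t (n + 1) := by
      simp only [he]
      rw [hFe, hfG, ν.apply_symm_apply, if_neg (by simp), hat]
    rw [hval]
    have := mul_le_mul_of_nonneg_left hsup (ht0 (n + 1))
    linarith [ht' (n + 1)]
  · exact Submodule.sum_mem _ fun k hk => Submodule.smul_mem _ _
      (Submodule.subset_span ⟨k, by simpa using hk, rfl⟩)
  · set S := Submodule.span ℝ (e '' Set.Icc 1 n) with hS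
    have hd : ‖f - G n‖ ≤ Metric.infDist f (S : Set (lp (fun _ : ι => ℝ) (ENNReal.ofReal q))) := by
      refine (Metric.le_infDist ⟨0, S.zero_mem⟩).2 fun y hy => ?_
      rw [dist_eq_norm]
      -- Elements of `Φ_n` vanish off `1, …, n`, while `f - G_n` vanishes there and is `f` elsewhere.
      have hy0 : ∀ i, ν i ∉ Finset.Icc 1 n → y i = 0 := fun i hi => by
        induction hy using Submodule.span_induction with
        | mem x hx =>
          obtain ⟨k, hk, rfl⟩ := hx
          exact he_ne k i (fun h => hi (by rw [h]; simpa using hk))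
        | zero => rfl
        | add x y _ _ hx hy => rw [lp.coeFn_add, Pi.add_apply, hx, hy, add_zero]
        | smul b x _ hx => rw [lp.coeFn_smul, Pi.smul_apply, hx, smul_zero]
      refine lp.norm_mono hQ0.ne' fun i => ?_
      rw [hfG]
      split_ifs with h
      · simp
      · rw [lp.coeFn_sub, Pi.sub_apply, hy0 i h, sub_zero, hf]
    have := mul_nonneg (hη n) ((norm_nonneg _).trans hd)
    linarith [hη' n]
  · intro h
    have := ge_of_tendsto' h hnorm
    linarith

/-! ### The equivalence -/

/-- **Corollary 3.** Let `1 < q ≤ 2`, `p = q/(q−1)`, and assume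
`{t'_n}, {δ_n}, {δ'_n}, {η_n}, {η'_n}` are all summable.  Then `Σ_n t_n^p = ∞`
iff for every real Banach space `X` with modulus of smoothness of power type `q`,
every dictionary, every element and every realization of the gAWCGA the remainders
tend to `0`; moreover if `Σ_n t_n^p < ∞` there is a divergent realization in `ℓ_q`. -/
theorem gAWCGA_l1_errors_converges_iff
    (q p : ℝ) (hq1 : 1 < q) (hq2 : q ≤ 2) (hpq : p = q / (q - 1))
    [Fact (1 ≤ ENNReal.ofReal q)]
    (t t' δ δ' η η' : ℕ → ℝ)
    (ht0 : ∀ n, 0 ≤ t n) (ht1 : ∀ n, t n ≤ 1) (ht' : ∀ n, 0 ≤ t' n)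
    (hδ : ∀ n, 0 ≤ δ n) (hδ' : ∀ n, 0 ≤ δ' n)
    (hη : ∀ n, 0 ≤ η n) (hη' : ∀ n, 0 ≤ η' n)
    (ht'sum : Summable (fun n => t' (n + 1)))
    (hδsum : Summable δ) (hδ'sum : Summable δ')
    (hηsum : Summable (fun n => η (n + 1)))
    (hη'sum : Summable (fun n => η' (n + 1))) :
    ((¬ Summable (fun n => t (n + 1) ^ p)) ↔
      (∀ (X : Type*) [NormedAddCommGroup X] [NormedSpace ℝ X] [CompleteSpace X],
        (∃ γ > 0, ∀ u > 0, modS X u ≤ γ * u ^ q) →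
        ∀ D : Set X, IsDictionary D → ∀ f : X,
          ∀ (F : ℕ → X →L[ℝ] ℝ) (φ G : ℕ → X),
            IsGAWCGA D f t t' δ δ' η η' F φ G →
            Tendsto (fun n => ‖f - G n‖) atTop (𝓝 0))) ∧
    (Summable (fun n => t (n + 1) ^ p) →
      ∃ (D : Set (Lq q)) (f : Lq q) (F : ℕ → Lq q →L[ℝ] ℝ) (φ G : ℕ → Lq q),
        IsDictionary D ∧ IsGAWCGA D f t t' δ δ' η η' F φ G ∧
        ¬ Tendsto (fun n => ‖f - G n‖) atTop (𝓝 0)) := by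
  have hη1 := (summable_nat_add_iff 1).1 hηsum
  have hη2 := (summable_nat_add_iff 1).1 hη'sum
  refine ⟨⟨fun hns X _ _ _ ⟨γ, hγ, hX⟩ D hD f F φ G hG => ?_, fun hconv hs => ?_⟩, fun hs => ?_⟩
  · exact converges hq1 hpq hγ hX ht0 ht1 ht' hδ hδ' hη hη' ht'sum hδsum hδ'sum hη1 hη2 hns hD hG
  · obtain ⟨D, f, F, φ, G, hD, hG, hdiv⟩ :=
      -- `ULift ℕ` as index type places the space in the universe of the spaces `X`.
      exists_divergent Equiv.ulift hq1 hpq ht0 ht1 ht' hδ hδ' hη hη' hs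
    exact hdiv (hconv _ ⟨1, one_pos, fun u hu => by
      rw [one_mul]; exact modS_lp_le hq1 hq2 hu⟩ D hD f F φ G hG)
  · exact exists_divergent (Equiv.refl ℕ) hq1 hpq ht0 ht1 ht' hδ hδ' hη hη' hs
end

section
/- Let X be a real Banach space with modulus of smoothness ρ(u), let f ∈ X, let Φ_n be a finite-dimensional subspace of X, let E_n = inf_{G∈Φ_n} ‖f−G‖, and let f_n = f − G_n where G_n ∈ Φ_n satisfies ‖f−G_n‖ ≤ (1+η_n) E_n + η'_n with η_n, η'_n ≥ 0, and assume f_n ≠ 0. Let F_n be a continuous linear functional with ‖F_n‖ ≤ 1 and F_n(f_n) ≥ (1−δ_n)‖f_n‖ − δ'_n, where δ_n, δ'_n ≥ 0. Then for every φ ∈ Φ_n, |F_n(φ)| ≤ β_n(φ) := inf_{λ>0} (1/λ) · ( δ_n + η_n + (δ'_n + η'_n)/‖f_n‖ + 2ρ(λ‖φ‖) ). -/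
/-- The set defining `modS X u` is bounded above by `|u|`, so its supremum in `ℝ` is genuine. -/
lemma bddAbove_modS_set (X : Type*) [NormedAddCommGroup X] [NormedSpace ℝ X] (u : ℝ) :
    BddAbove {r : ℝ | ∃ x y : X, ‖x‖ = 1 ∧ ‖y‖ = 1 ∧
      r = (‖x + u • y‖ + ‖x - u • y‖) / 2 - 1} := by
  refine ⟨|u|, ?_⟩
  rintro r ⟨x, y, hx, hy, rfl⟩
  have h1 := norm_add_le x (u • y)
  have h2 := norm_sub_le x (u • y)
  rw [norm_smul, hx, hy, Real.norm_eq_abs] at h1 h2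
  linarith

lemma modS_nonneg (X : Type*) [NormedAddCommGroup X] [NormedSpace ℝ X] (u : ℝ) :
    0 ≤ modS X u := by
  apply Real.sSup_nonneg
  rintro r ⟨x, y, hx, hy, rfl⟩
  have h := norm_add_le (x + u • y) (x - u • y)
  have h2 : (x + u • y) + (x - u • y) = (2 : ℝ) • x := by rw [two_smul]; abel
  rw [h2, norm_smul, hx, Real.norm_eq_abs, abs_two] at h
  linarith

/-- The smoothness inequality for a nonzero vector `g` and an arbitrary direction `ψ`, obtained by
normalizing both. -/
lemma norm_add_add_norm_sub_le_s6 {X : Type*} [NormedAddCommGroup X] [NormedSpace ℝ X]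
    {g : X} (hg : g ≠ 0) (ψ : X) (l : ℝ) :
    ‖g + (l * ‖g‖) • ψ‖ + ‖g - (l * ‖g‖) • ψ‖ ≤ 2 * ‖g‖ * (1 + modS X (l * ‖ψ‖)) := by
  have hN : 0 < ‖g‖ := norm_pos_iff.mpr hg
  rcases eq_or_ne ψ 0 with rfl | hψ
  · have := mul_nonneg hN.le (modS_nonneg X (l * ‖(0 : X)‖))
    simp only [smul_zero, add_zero, sub_zero]
    linarith
  have hψN : ‖ψ‖ ≠ 0 := norm_ne_zero_iff.mpr hψ
  have h := le_csSup (bddAbove_modS_set X (l * ‖ψ‖))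
    ⟨‖g‖⁻¹ • g, ‖ψ‖⁻¹ • ψ, by rw [norm_smul, norm_inv, norm_norm, inv_mul_cancel₀ hN.ne'],
      by rw [norm_smul, norm_inv, norm_norm, inv_mul_cancel₀ hψN], rfl⟩
  change _ ≤ modS X (l * ‖ψ‖) at h
  have hu : (l * ‖ψ‖) • ‖ψ‖⁻¹ • ψ = l • ψ := by
    rw [smul_smul, mul_assoc, mul_inv_cancel₀ hψN, mul_one]
  rw [hu] at h
  have hg1 : g = ‖g‖ • ‖g‖⁻¹ • g := (smul_inv_smul₀ hN.ne' g).symm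
  have e1 : ‖g + (l * ‖g‖) • ψ‖ = ‖g‖ * ‖‖g‖⁻¹ • g + l • ψ‖ := by
    rw [← norm_smul_of_nonneg hN.le, smul_add, ← hg1, smul_smul, mul_comm l]
  have e2 : ‖g - (l * ‖g‖) • ψ‖ = ‖g‖ * ‖‖g‖⁻¹ • g - l • ψ‖ := by
    rw [← norm_smul_of_nonneg hN.le, smul_sub, ← hg1, smul_smul, mul_comm l]
  rw [e1, e2]
  have := mul_le_mul_of_nonneg_left h hN.le
  linarith

/-- **Lemma 2.** Let `X` be a real Banach space with modulus of smoothness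
`ρ`, `f ∈ X`, `Φₙ` a finite-dimensional subspace, `Eₙ = inf_{G ∈ Φₙ} ‖f − G‖`,
`Gₙ ∈ Φₙ` with `‖f − Gₙ‖ ≤ (1+ηₙ)Eₙ + η'ₙ`, `fₙ = f − Gₙ ≠ 0`, and `Fₙ` a continuous
linear functional with `‖Fₙ‖ ≤ 1` and `Fₙ(fₙ) ≥ (1−δₙ)‖fₙ‖ − δ'ₙ`.  Then for every
`φ ∈ Φₙ`,
`|Fₙ(φ)| ≤ βₙ(φ) = inf_{λ>0} (1/λ)(δₙ + ηₙ + (δ'ₙ + η'ₙ)/‖fₙ‖ + 2ρ(λ‖φ‖))`. -/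
theorem abs_apply_le_beta
    {X : Type*} [NormedAddCommGroup X] [NormedSpace ℝ X] [CompleteSpace X]
    (f : X) (Φ : Submodule ℝ X) [FiniteDimensional ℝ Φ]
    (δ δ' η η' : ℝ) (hδ : 0 ≤ δ) (hδ' : 0 ≤ δ') (hη : 0 ≤ η) (hη' : 0 ≤ η')
    (Gn : X) (hGmem : Gn ∈ Φ)
    (hGapprox : ‖f - Gn‖ ≤ (1 + η) * Metric.infDist f (Φ : Set X) + η')
    (hfn : f - Gn ≠ 0)
    (F : X →L[ℝ] ℝ) (hF1 : ‖F‖ ≤ 1)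
    (hF2 : (1 - δ) * ‖f - Gn‖ - δ' ≤ F (f - Gn))
    (φ : X) (hφ : φ ∈ Φ) :
    |F φ| ≤ sInf ((fun l : ℝ =>
      l⁻¹ * (δ + η + (δ' + η') / ‖f - Gn‖ + 2 * modS X (l * ‖φ‖))) '' Set.Ioi 0) := by
  refine le_csInf (Set.nonempty_Ioi.image _) ?_
  rintro _ ⟨l, hl, rfl⟩
  have hl : 0 < l := hl
  obtain ⟨ψ, hψ, hψN, hFψ⟩ : ∃ ψ ∈ Φ, ‖ψ‖ = ‖φ‖ ∧ F ψ = |F φ| := by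
    rcases abs_choice (F φ) with h | h
    · exact ⟨φ, hφ, rfl, h.symm⟩
    · exact ⟨-φ, Φ.neg_mem hφ, norm_neg φ, by rw [map_neg, h]⟩
  have hN : 0 < ‖f - Gn‖ := norm_pos_iff.mpr hfn
  have hsm := norm_add_add_norm_sub_le_s6 hfn ψ l
  rw [hψN] at hsm
  set N := ‖f - Gn‖ with hNdef
  have hplus : F (f - Gn) + l * N * |F φ| ≤ ‖f - Gn + (l * N) • ψ‖ := by
    have h := (le_abs_self _).trans (F.le_of_opNorm_le hF1 (f - Gn + (l * N) • ψ))
    rwa [map_add, map_smul, hFψ, smul_eq_mul, one_mul] at h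
  have hminus : Metric.infDist f (Φ : Set X) ≤ ‖f - Gn - (l * N) • ψ‖ := by
    have h := Metric.infDist_le_dist_of_mem (x := f)
      (show Gn + (l * N) • ψ ∈ (Φ : Set X) from Φ.add_mem hGmem (Φ.smul_mem _ hψ))
    rwa [dist_eq_norm, ← sub_sub] at h
  have hEN : Metric.infDist f (Φ : Set X) ≤ N := by
    have h := Metric.infDist_le_dist_of_mem (x := f) (show Gn ∈ (Φ : Set X) from hGmem)
    rwa [dist_eq_norm] at h
  have hηE := mul_le_mul_of_nonneg_left hEN hη
  have hdiv : (δ' + η') / N * N = δ' + η' := div_mul_cancel₀ _ hN.ne'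
  change |F φ| ≤ l⁻¹ * (δ + η + (δ' + η') / N + 2 * modS X (l * ‖φ‖))
  rw [le_inv_mul_iff₀ hl]
  refine le_of_mul_le_mul_right ?_ hN
  linarith
end

section
/- Under the hypotheses of the previous setting (X a real Banach space with modulus of smoothness ρ, D a dictionary, f ∈ X, Φ_n = span{φ_1,…,φ_n}, E_n = inf_{G∈Φ_n}‖f−G‖, G_n ∈ Φ_n with ‖f−G_n‖ ≤ (1+η_n)E_n + η'_n, f_n = f−G_n ≠ 0, F_n with ‖F_n‖ ≤ 1 and F_n(f_n) ≥ (1−δ_n)‖f_n‖ − δ'_n, φ_{n+1} ∈ D with F_n(φ_{n+1}) ≥ t_{n+1} sup_{g∈D} F_n(g) − t'_{n+1}, Φ_{n+1} = span(Φ_n ∪ {φ_{n+1}}), and ε ≥ 0, h ∈ X with ‖f−h‖ ≤ ε and h/A ∈ A_1(D) for some A > 0), for every m > n, with E_m = inf_{G∈Φ_m}‖f−G‖, one has E_m ≤ inf_{μ≥0} { ‖f_n‖ [ 1 + δ_n + δ'_n/‖f_n‖ + 2ρ(μ/‖f_n‖) − (μ t_{n+1})/(A‖f_n‖) · ( (1−δ_n)‖f_n‖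 − δ'_n − β_n(G_n) − ε ) ] + μ t'_{n+1} }, where β_n(φ) = inf_{λ>0} (1/λ)( δ_n + η_n + (δ'_n + η'_n)/‖f_n‖ + 2ρ(λ‖φ‖) ). -/
section Smoothness

variable {X : Type*} [NormedAddCommGroup X] [NormedSpace ℝ X]

theorem le_modS {x y : X} (u : ℝ) (hx : ‖x‖ = 1) (hy : ‖y‖ = 1) :
    (‖x + u • y‖ + ‖x - u • y‖) / 2 - 1 ≤ modS X u := by
  refine le_csSup ⟨|u|, ?_⟩ ⟨x, y, hx, hy, rfl⟩
  rintro r ⟨x, y, hx, hy, rfl⟩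
  have h1 := norm_add_le x (u • y)
  have h2 := norm_sub_le x (u • y)
  rw [norm_smul, Real.norm_eq_abs, hx, hy] at h1 h2
  linarith

/-- The defining inequality of the modulus of smoothness, rescaled to arbitrary vectors. -/
theorem norm_add_add_norm_sub_le_s8 {a : X} (ha : a ≠ 0) (v : X) :
    ‖a + v‖ + ‖a - v‖ ≤ 2 * ‖a‖ * (1 + modS X (‖v‖ / ‖a‖)) := by
  have hN : 0 < ‖a‖ := norm_pos_iff.2 ha
  -- For `v = 0` any unit vector serves as the direction of `v`.
  obtain ⟨y, hy, hvy⟩ : ∃ y : X, ‖y‖ = 1 ∧ v = ‖v‖ • y := by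
    by_cases hv : v = 0
    · exact ⟨‖a‖⁻¹ • a, norm_smul_inv_norm ha, by simp [hv]⟩
    · exact ⟨‖v‖⁻¹ • v, norm_smul_inv_norm hv,
        by rw [smul_inv_smul₀ (norm_ne_zero_iff.2 hv)]⟩
  have key := le_modS (‖v‖ / ‖a‖) (norm_smul_inv_norm (𝕜 := ℝ) ha) hy
  have hvy' : (‖v‖ / ‖a‖) • y = ‖a‖⁻¹ • v := by
    rw [div_eq_inv_mul, mul_smul, ← hvy]
  simp only [RCLike.ofReal_real_eq_id, id] at key
  rw [hvy', ← smul_add, ← smul_sub, norm_smul, norm_smul, norm_inv, norm_norm] at key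
  have h1 : ‖a‖ * ((‖a‖⁻¹ * ‖a + v‖ + ‖a‖⁻¹ * ‖a - v‖) / 2 - 1)
      = (‖a + v‖ + ‖a - v‖) / 2 - ‖a‖ := by
    field_simp
  have h2 := mul_le_mul_of_nonneg_left key hN.le
  rw [h1] at h2
  linarith

/-- A continuous functional is bounded on `A₁(D)` by its supremum over `D`. -/
theorem functional_le_sSup {D : Set X} (hD : ∀ g ∈ D, ‖g‖ = 1) (F : X →L[ℝ] ℝ)
    {x : X} (hx : x ∈ closure (convexHull ℝ D)) : F x ≤ sSup ((fun g => F g) '' D) := by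
  have hb : BddAbove ((fun g => F g) '' D) := by
    refine ⟨‖F‖, ?_⟩
    rintro _ ⟨g, hg, rfl⟩
    have := F.le_opNorm g
    rw [hD g hg, mul_one] at this
    exact (le_abs_self _).trans this
  have hsub : closure (convexHull ℝ D) ⊆ {x | F x ≤ sSup ((fun g => F g) '' D)} := by
    refine closure_minimal (convexHull_min ?_ ?_) ?_
    · intro g hg
      exact le_csSup hb ⟨g, hg, rfl⟩
    · exact convex_halfSpace_le F.toLinearMap.isLinear _
    · exact isClosed_le F.continuous continuous_const
  exact hsub hx

theorem functional_le_norm {F : X →L[ℝ] ℝ} (hF : ‖F‖ ≤ 1) (x : X) : F x ≤ ‖x‖ :=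
  (le_abs_self _).trans ((F.le_opNorm x).trans
    (mul_le_of_le_one_left (norm_nonneg x) hF))

/-- An almost norming functional of the residual `f - G` of an almost best approximation `G` from
a subspace `V` is small on `V`: the quantity on the right is the one whose infimum over `l > 0`
is `βₙ(v)`. -/
theorem functional_le_of_almost_best (V : Submodule ℝ X) {f G v : X} {δ δ' η η' l : ℝ}
    (hη : 0 ≤ η) (hη' : 0 ≤ η') (hl : 0 < l) (hG : G ∈ V) (hv : v ∈ V)
    (hGa : ‖f - G‖ ≤ (1 + η) * Metric.infDist f (V : Set X) + η')
    (hfn : f - G ≠ 0) {F : X →L[ℝ] ℝ} (hF1 : ‖F‖ ≤ 1)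
    (hF2 : (1 - δ) * ‖f - G‖ - δ' ≤ F (f - G)) :
    F v ≤ l⁻¹ * (δ + η + (δ' + η') / ‖f - G‖ + 2 * modS X (l * ‖v‖)) := by
  set N := ‖f - G‖ with hNdef
  have hN : 0 < N := norm_pos_iff.2 hfn
  have key := norm_add_add_norm_sub_le_s8 hfn ((l * N) • v)
  have hq : ‖(l * N) • v‖ / N = l * ‖v‖ := by
    rw [norm_smul, Real.norm_eq_abs, abs_of_pos (mul_pos hl hN)]
    field_simp
  rw [← hNdef, hq] at key
  have h1 := functional_le_norm hF1 (f - G + (l * N) • v)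
  rw [map_add, map_smul, smul_eq_mul] at h1
  have h2 : Metric.infDist f (V : Set X) ≤ ‖f - G - (l * N) • v‖ := by
    have hmem : G + (l * N) • v ∈ (V : Set X) := V.add_mem hG (V.smul_mem _ hv)
    have := Metric.infDist_le_dist_of_mem (x := f) hmem
    rwa [dist_eq_norm, ← sub_sub] at this
  -- Near-optimality of `G`, using `(1 + η)((1 - η)N - η') ≤ N - η'`.
  have h3 : (1 - η) * N - η' ≤ Metric.infDist f (V : Set X) := by
    by_contra! hlt
    have := mul_lt_mul_of_pos_left hlt (show 0 < 1 + η by linarith)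
    nlinarith [mul_nonneg (mul_nonneg hη hη) hN.le, mul_nonneg hη hη']
  have h4 : l * N * F v ≤ N * (δ + η + (δ' + η') / N + 2 * modS X (l * ‖v‖)) := by
    have : N * ((δ' + η') / N) = δ' + η' := by field_simp
    linarith
  rw [mul_comm l N, mul_assoc] at h4
  exact (le_inv_mul_iff₀ hl).2 (le_of_mul_le_mul_left h4 hN)

end Smoothness

/-- **Lemma 4.** In the gAWCGA setting (`Φ_k = span{φ_1,…,φ_k}`,
`E_k = inf_{G ∈ Φ_k} ‖f − G‖`, `Gₙ ∈ Φₙ` with `‖f − Gₙ‖ ≤ (1+ηₙ)Eₙ + η'ₙ`,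
`fₙ = f − Gₙ ≠ 0`, `Fₙ` with `‖Fₙ‖ ≤ 1`, `Fₙ(fₙ) ≥ (1−δₙ)‖fₙ‖ − δ'ₙ`, `φ_{n+1} ∈ D`
with `Fₙ(φ_{n+1}) ≥ t_{n+1} sup_{g∈D} Fₙ(g) − t'_{n+1}`, and `ε ≥ 0`, `h ∈ X` with
`‖f − h‖ ≤ ε`, `h/A ∈ A₁(D)`, `A > 0`), for every `m > n` one has
`E_m ≤ inf_{μ≥0} { ‖fₙ‖ [1 + δₙ + δ'ₙ/‖fₙ‖ + 2ρ(μ/‖fₙ‖)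
  − μ t_{n+1}/(A‖fₙ‖) ((1−δₙ)‖fₙ‖ − δ'ₙ − βₙ(Gₙ) − ε)] + μ t'_{n+1} }`. -/
theorem E_m_le
    {X : Type*} [NormedAddCommGroup X] [NormedSpace ℝ X] [CompleteSpace X]
    (D : Set X) (hD : IsDictionary D)
    (f : X) (φ : ℕ → X) (n m : ℕ) (hnm : n < m)
    (δ δ' η η' t t' : ℝ)
    (hδ : 0 ≤ δ) (hδ' : 0 ≤ δ') (hη : 0 ≤ η) (hη' : 0 ≤ η')
    (ht0 : 0 ≤ t) (ht1 : t ≤ 1) (ht' : 0 ≤ t')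
    (Gn : X) (hGmem : Gn ∈ Submodule.span ℝ (φ '' Set.Icc 1 n))
    (hGapprox : ‖f - Gn‖ ≤ (1 + η) *
      Metric.infDist f ((Submodule.span ℝ (φ '' Set.Icc 1 n) : Submodule ℝ X) : Set X) + η')
    (hfn : f - Gn ≠ 0)
    (F : X →L[ℝ] ℝ) (hF1 : ‖F‖ ≤ 1)
    (hF2 : (1 - δ) * ‖f - Gn‖ - δ' ≤ F (f - Gn))
    (hφD : φ (n + 1) ∈ D)
    (hφsel : t * sSup ((fun g => F g) '' D) - t' ≤ F (φ (n + 1)))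
    (ε : ℝ) (hε : 0 ≤ ε) (h : X) (A : ℝ) (hA : 0 < A)
    (hfh : ‖f - h‖ ≤ ε) (hhA : A⁻¹ • h ∈ closure (convexHull ℝ D)) :
    Metric.infDist f ((Submodule.span ℝ (φ '' Set.Icc 1 m) : Submodule ℝ X) : Set X) ≤
      sInf ((fun μ : ℝ =>
        ‖f - Gn‖ * (1 + δ + δ' / ‖f - Gn‖ + 2 * modS X (μ / ‖f - Gn‖)
          - (μ * t) / (A * ‖f - Gn‖) *
            ((1 - δ) * ‖f - Gn‖ - δ' -
              sInf ((fun l : ℝ =>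
                l⁻¹ * (δ + η + (δ' + η') / ‖f - Gn‖ + 2 * modS X (l * ‖Gn‖)))
                '' Set.Ioi 0) - ε))
        + μ * t') '' Set.Ici 0) := by
  obtain ⟨hD1, -, -⟩ := hD
  set N := ‖f - Gn‖ with hNdef
  have hN : 0 < N := norm_pos_iff.2 hfn
  set β := sInf ((fun l : ℝ =>
    l⁻¹ * (δ + η + (δ' + η') / N + 2 * modS X (l * ‖Gn‖))) '' Set.Ioi 0)
  have hβ : -F Gn ≤ β := by
    refine le_csInf (Set.Nonempty.image _ ⟨1, Set.mem_Ioi.2 one_pos⟩) ?_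
    rintro _ ⟨l, hl, rfl⟩
    have := functional_le_of_almost_best _ hη hη' (Set.mem_Ioi.1 hl) hGmem
      (Submodule.neg_mem _ hGmem) hGapprox hfn hF1 hF2
    rwa [map_neg, norm_neg] at this
  have hsup : ((1 - δ) * N - δ' - β - ε) / A ≤ sSup ((fun g => F g) '' D) := by
    have h1 := functional_le_sSup hD1 F hhA
    rw [map_smul, smul_eq_mul] at h1
    have h2 := (functional_le_norm hF1 (f - h)).trans hfh
    rw [map_sub] at h2
    rw [map_sub] at hF2
    refine le_trans ?_ h1
    rw [div_eq_inv_mul]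
    exact mul_le_mul_of_nonneg_left (by linarith) (inv_nonneg.2 hA.le)
  have hφ : t * (((1 - δ) * N - δ' - β - ε) / A) - t' ≤ F (φ (n + 1)) := by
    linarith [mul_le_mul_of_nonneg_left hsup ht0]
  refine le_csInf (Set.Nonempty.image _ ⟨0, Set.mem_Ici.2 le_rfl⟩) ?_
  rintro _ ⟨μ, hμ, rfl⟩
  have hμ : 0 ≤ μ := hμ
  have hE : Metric.infDist f
      ((Submodule.span ℝ (φ '' Set.Icc 1 m) : Submodule ℝ X) : Set X) ≤
      ‖f - Gn - μ • φ (n + 1)‖ := by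
    have hmem : Gn + μ • φ (n + 1) ∈
        ((Submodule.span ℝ (φ '' Set.Icc 1 m) : Submodule ℝ X) : Set X) := by
      refine Submodule.add_mem _ ?_ (Submodule.smul_mem _ _ ?_)
      · exact Submodule.span_mono
          (Set.image_mono (Set.Icc_subset_Icc_right hnm.le)) hGmem
      · exact Submodule.subset_span ⟨n + 1, ⟨by omega, by omega⟩, rfl⟩
    have := Metric.infDist_le_dist_of_mem (x := f) hmem
    rwa [dist_eq_norm, ← sub_sub] at this
  have key := norm_add_add_norm_sub_le_s8 hfn (μ • φ (n + 1))
  rw [norm_smul, hD1 _ hφD, mul_one, Real.norm_eq_abs, abs_of_nonneg hμ, ← hNdef] at key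
  have h1 := functional_le_norm hF1 (f - Gn + μ • φ (n + 1))
  rw [map_add, map_smul, smul_eq_mul] at h1
  have h2 := mul_le_mul_of_nonneg_left hφ hμ
  have e : N * (1 + δ + δ' / N + 2 * modS X (μ / N)
        - (μ * t) / (A * N) * ((1 - δ) * N - δ' - β - ε)) + μ * t'
      = 2 * N * (1 + modS X (μ / N)) - ((1 - δ) * N - δ')
        - μ * (t * (((1 - δ) * N - δ' - β - ε) / A) - t') := by
    field_simp
    ring
  show _ ≤ N * (1 + δ + δ' / N + 2 * modS X (μ / N)
        - (μ * t) / (A * N) * ((1 - δ) * N - δ' - β - ε)) + μ * t'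
  rw [e]
  linarith
end

section
/- For every x ∈ ℓ₁, the non-decreasing sequence {ϑ_n(x)} has a finite limit ‖x‖_X = lim_{n→∞} ϑ_n(x), and ρ·‖x‖₁ ≤ ‖x‖_X ≤ ‖x‖₁, where ρ = 2^{−Σ_{k=1}^∞ (1 − 1/p_k)} > 0. Consequently ‖·‖_X is a norm on ℓ₁ equivalent to ‖·‖₁. -/
/-!
Write `S_n = ∑_{k<n} |x_k|`. Everything rests on three two-variable inequalities for
`(a, b) ↦ (a ^ q + b ^ q) ^ (1 / q)` with `a, b ≥ 0` and `q ≥ 1`: it is at most `a + b`, it is at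
least `2 ^ (-(1 - 1 / q)) * (a + b)` (power mean inequality, `two_rpow_mul_add_le`), and it is
subadditive (Minkowski, `minkowski_two`). Each propagates through the recursion defining `vth`.
The upper bound gives `vth p n x ≤ S_n`. In the lower bound the factors multiply up, and since
each factor is at most `1` one gets `2 ^ (-∑_{k<n} (1 - 1 / p k)) * S_n ≤ vth p n x`. Minkowski
together with monotonicity in the first argument gives the triangle inequality for `vth p n`.
All of these pass to the limit `n → ∞`, which exists because `vth p n x` increases and is bounded
by `‖x‖₁`; definiteness follows from the lower bound.
-/

open Filter Topology

/-- The recursively defined functionals `ϑ_n` (0-based indexing: the exponent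
`p k` here is the paper's `p_{k+1}`, and the coordinate `x k` is the paper's
`x_{k+1}`): `ϑ_0(x) = 0` and
`ϑ_{n+1}(x) = (ϑ_n(x)^{p n} + |x n|^{p n})^{1/(p n)}`; `ϑ_n` depends only on the
first `n` coordinates of `x`. -/
noncomputable def vth (p : ℕ → ℝ) : ℕ → (ℕ → ℝ) → ℝ
  | 0, _ => 0
  | n + 1, x => (vth p n x ^ p n + |x n| ^ p n) ^ (1 / p n)

/-- The limit norm `‖x‖_X = lim_n ϑ_n(x)` (the sequence `ϑ_n(x)` is non-decreasing,
so the limit equals the supremum). -/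
noncomputable def XNf (p : ℕ → ℝ) (x : ℕ → ℝ) : ℝ := ⨆ n, vth p n x

/-- The power mean inequality for two numbers, in the form used by the recursion. -/
theorem two_rpow_mul_add_le {q a b : ℝ} (hq : 1 ≤ q) (ha : 0 ≤ a) (hb : 0 ≤ b) :
    (2 : ℝ) ^ (-(1 - 1 / q)) * (a + b) ≤ (a ^ q + b ^ q) ^ (1 / q) := by
  have h := Real.arith_mean_le_rpow_mean Finset.univ ![(1 / 2 : ℝ), 1 / 2] ![a, b]
    (by simp [Fin.forall_fin_two]) (by norm_num [Fin.sum_univ_two])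
    (by simp [Fin.forall_fin_two, ha, hb]) hq
  simp only [Fin.sum_univ_two, Matrix.cons_val_zero, Matrix.cons_val_one] at h
  have hs : 0 ≤ a ^ q + b ^ q := by positivity
  rw [← mul_add, ← mul_add, Real.mul_rpow (by norm_num) hs, one_div (2 : ℝ),
    Real.inv_rpow (by norm_num)] at h
  have h2 : (0 : ℝ) < 2 ^ (1 / q) := by positivity
  have e : (2 : ℝ) ^ (-(1 - 1 / q)) = 2 ^ (1 / q) * 2⁻¹ := by
    rw [neg_sub, Real.rpow_sub (by norm_num), Real.rpow_one, div_eq_mul_inv]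
  calc (2 : ℝ) ^ (-(1 - 1 / q)) * (a + b) = 2 ^ (1 / q) * (2⁻¹ * (a + b)) := by rw [e]; ring
    _ ≤ 2 ^ (1 / q) * ((2 ^ (1 / q))⁻¹ * (a ^ q + b ^ q) ^ (1 / q)) := by gcongr
    _ = (a ^ q + b ^ q) ^ (1 / q) := by field_simp

/-- Minkowski's inequality in the plane. -/
theorem minkowski_two {q a b c d : ℝ} (hq : 1 ≤ q) (ha : 0 ≤ a) (hb : 0 ≤ b) (hc : 0 ≤ c)
    (hd : 0 ≤ d) :
    ((a + c) ^ q + (b + d) ^ q) ^ (1 / q)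
      ≤ (a ^ q + b ^ q) ^ (1 / q) + (c ^ q + d ^ q) ^ (1 / q) := by
  have h := Real.Lp_add_le_of_nonneg Finset.univ (f := ![a, b]) (g := ![c, d]) hq
    (by simp [Fin.forall_fin_two, ha, hb]) (by simp [Fin.forall_fin_two, hc, hd])
  simpa [Fin.sum_univ_two] using h

theorem vth_nonneg (p : ℕ → ℝ) (x : ℕ → ℝ) : ∀ n, 0 ≤ vth p n x
  | 0 => le_rfl
  | n + 1 => by
    have := vth_nonneg p x n
    rw [vth]; positivity

theorem vth_le_succ {p : ℕ → ℝ} (hp : ∀ n, 1 < p n) (x : ℕ → ℝ) (n : ℕ) :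
    vth p n x ≤ vth p (n + 1) x := by
  have h0 := vth_nonneg p x n
  have hpn : 0 < p n := zero_lt_one.trans (hp n)
  calc vth p n x = (vth p n x ^ p n) ^ (1 / p n) := by
        rw [one_div, Real.rpow_rpow_inv h0 hpn.ne']
    _ ≤ vth p (n + 1) x := by
        rw [vth]
        gcongr
        exact le_add_of_nonneg_right (by positivity)

theorem vth_le_sum {p : ℕ → ℝ} (hp : ∀ n, 1 < p n) (x : ℕ → ℝ) (n : ℕ) :
    vth p n x ≤ ∑ k ∈ Finset.range n, |x k| := by
  induction n with
  | zero => simp [vth]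
  | succ n ih =>
    rw [vth, Finset.sum_range_succ]
    have := Real.rpow_add_rpow_le_add (vth_nonneg p x n) (abs_nonneg (x n)) (hp n).le
    linarith

/-- The new coordinate `|x n|` only picks up the factor of step `n`; the factors of the earlier
steps may be applied to it as well because they are at most `1`. -/
theorem mul_sum_le_vth {p : ℕ → ℝ} (hp : ∀ n, 1 < p n) (x : ℕ → ℝ) (n : ℕ) :
    (2 : ℝ) ^ (-(∑ k ∈ Finset.range n, (1 - 1 / p k))) * ∑ k ∈ Finset.range n, |x k|
      ≤ vth p n x := by
  induction n with
  | zero => simp [vth]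
  | succ n ih =>
    have hs : 0 ≤ ∑ k ∈ Finset.range n, (1 - 1 / p k) := Finset.sum_nonneg fun k _ => by
      have := (div_le_one (zero_lt_one.trans (hp k))).2 (hp k).le
      linarith
    have h1 : (2 : ℝ) ^ (-(∑ k ∈ Finset.range n, (1 - 1 / p k))) ≤ 1 :=
      Real.rpow_le_one_of_one_le_of_nonpos (by norm_num) (by linarith)
    have h2 : (2 : ℝ) ^ (-(∑ k ∈ Finset.range n, (1 - 1 / p k))) * |x n| ≤ |x n| :=
      mul_le_of_le_one_left (abs_nonneg _) h1
    have h3 := two_rpow_mul_add_le (hp n).le (vth_nonneg p x n) (abs_nonneg (x n))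
    rw [vth]
    refine le_trans ?_ h3
    rw [Finset.sum_range_succ, Finset.sum_range_succ, neg_add, Real.rpow_add (by norm_num),
      mul_comm ((2 : ℝ) ^ (-(∑ k ∈ Finset.range n, (1 - 1 / p k)))), mul_assoc]
    gcongr
    linarith

theorem vth_smul {p : ℕ → ℝ} (hp : ∀ n, 1 < p n) (c : ℝ) (x : ℕ → ℝ) (n : ℕ) :
    vth p n (c • x) = |c| * vth p n x := by
  induction n with
  | zero => simp [vth]
  | succ n ih =>
    have h0 := vth_nonneg p x n
    have hpn : 0 < p n := zero_lt_one.trans (hp n)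
    rw [vth, vth, ih, Pi.smul_apply, smul_eq_mul, abs_mul, Real.mul_rpow (abs_nonneg c) h0,
      Real.mul_rpow (abs_nonneg c) (abs_nonneg _), ← mul_add,
      Real.mul_rpow (by positivity) (by positivity), one_div,
      Real.rpow_rpow_inv (abs_nonneg c) hpn.ne']

theorem vth_add_le {p : ℕ → ℝ} (hp : ∀ n, 1 < p n) (x y : ℕ → ℝ) (n : ℕ) :
    vth p n (x + y) ≤ vth p n x + vth p n y := by
  induction n with
  | zero => simp [vth]
  | succ n ih =>
    have hpn : 0 < p n := zero_lt_one.trans (hp n)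
    have h0 := vth_nonneg p (x + y) n
    rw [vth, vth, vth]
    refine le_trans ?_ (minkowski_two (hp n).le (vth_nonneg p x n) (abs_nonneg (x n))
      (vth_nonneg p y n) (abs_nonneg (y n)))
    gcongr
    exact abs_add_le _ _

theorem lp_one_hasSum (x : lp (fun _ : ℕ => ℝ) 1) : HasSum (fun n => |x n|) ‖x‖ := by
  have h := lp.hasSum_norm (p := 1) (by simp) x
  simpa using h

theorem tendsto_vth {p : ℕ → ℝ} (hp : ∀ n, 1 < p n) (x : lp (fun _ : ℕ => ℝ) 1) :
    Tendsto (fun n => vth p n x) atTop (𝓝 (XNf p x)) := by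
  refine tendsto_atTop_ciSup (monotone_nat_of_le_succ (vth_le_succ hp x)) ⟨‖x‖, ?_⟩
  rintro _ ⟨n, rfl⟩
  exact (vth_le_sum hp x n).trans
    (sum_le_hasSum _ (fun k _ => abs_nonneg (x k)) (lp_one_hasSum x))

theorem XNf_le_norm {p : ℕ → ℝ} (hp : ∀ n, 1 < p n) (x : lp (fun _ : ℕ => ℝ) 1) :
    XNf p x ≤ ‖x‖ :=
  le_of_tendsto_of_tendsto' (tendsto_vth hp x) (lp_one_hasSum x).tendsto_sum_nat
    (vth_le_sum hp x)

theorem mul_norm_le_XNf {p : ℕ → ℝ} (hp : ∀ n, 1 < p n)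
    (hsum : Summable (fun n => 1 - 1 / p n)) (x : lp (fun _ : ℕ => ℝ) 1) :
    (2 : ℝ) ^ (-(∑' n, (1 - 1 / p n))) * ‖x‖ ≤ XNf p x := by
  have h : Tendsto (fun n => (2 : ℝ) ^ (-(∑ k ∈ Finset.range n, (1 - 1 / p k)))) atTop
      (𝓝 ((2 : ℝ) ^ (-(∑' n, (1 - 1 / p n))))) :=
    ((Real.continuous_const_rpow (by norm_num)).tendsto _).comp hsum.hasSum.tendsto_sum_nat.neg
  exact le_of_tendsto_of_tendsto' (h.mul (lp_one_hasSum x).tendsto_sum_nat) (tendsto_vth hp x)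
    (mul_sum_le_vth hp x)

/-- Assume `Σ_n (1 − 1/p_n) < ∞`.  For every `x ∈ ℓ₁` the
non-decreasing sequence `ϑ_n(x)` converges to `‖x‖_X` and
`ρ‖x‖₁ ≤ ‖x‖_X ≤ ‖x‖₁` with `ρ = 2^{−Σ (1−1/p_k)} > 0`; consequently `‖·‖_X`
is a norm on `ℓ₁` equivalent to `‖·‖₁`. -/
theorem Xnorm_equiv_l1 (p : ℕ → ℝ) (hp : ∀ n, 1 < p n) (hpa : Antitone p)
    (hsum : Summable (fun n => 1 - 1 / p n)) :
    (0 : ℝ) < 2 ^ (-(∑' n, (1 - 1 / p n))) ∧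
    (∀ x : lp (fun _ : ℕ => ℝ) 1,
      Monotone (fun n => vth p n ↑x) ∧
      Tendsto (fun n => vth p n ↑x) atTop (𝓝 (XNf p ↑x)) ∧
      (2 : ℝ) ^ (-(∑' n, (1 - 1 / p n))) * ‖x‖ ≤ XNf p ↑x ∧
      XNf p ↑x ≤ ‖x‖) ∧
    (∀ x : lp (fun _ : ℕ => ℝ) 1, XNf p ↑x = 0 ↔ x = 0) ∧
    (∀ (c : ℝ) (x : lp (fun _ : ℕ => ℝ) 1), XNf p ↑(c • x) = |c| * XNf p ↑x) ∧
    (∀ x y : lp (fun _ : ℕ => ℝ) 1, XNf p ↑(x + y) ≤ XNf p ↑x + XNf p ↑y) := by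
  have hρ : (0 : ℝ) < 2 ^ (-(∑' n, (1 - 1 / p n))) := Real.rpow_pos_of_pos (by norm_num) _
  refine ⟨hρ, fun x => ⟨monotone_nat_of_le_succ (vth_le_succ hp x), tendsto_vth hp x,
    mul_norm_le_XNf hp hsum x, XNf_le_norm hp x⟩, fun x => ⟨fun h => ?_, ?_⟩, fun c x => ?_,
    fun x y => ?_⟩
  · have h1 := mul_norm_le_XNf hp hsum x
    rw [h] at h1
    exact norm_le_zero_iff.1 (nonpos_of_mul_nonpos_right h1 hρ)
  · rintro rfl
    have h1 := XNf_le_norm hp 0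
    have h2 := mul_norm_le_XNf hp hsum 0
    rw [norm_zero] at h1 h2
    rw [mul_zero] at h2
    exact le_antisymm h1 h2
  · refine tendsto_nhds_unique (tendsto_vth hp (c • x)) ?_
    simpa only [lp.coeFn_smul, vth_smul hp] using (tendsto_vth hp x).const_mul |c|
  · refine le_of_tendsto_of_tendsto' (tendsto_vth hp (x + y))
      ((tendsto_vth hp x).add (tendsto_vth hp y)) fun n => ?_
    rw [lp.coeFn_add]
    exact vth_add_le hp _ _ n
end
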